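/- Let n ≥ 3, m₁, m₂ ≥ 0, and λ⁺ = (0, m₂+1, …, m₂+1, m₁+m₂+1). Then for every k ∈ ℤ_{≥0}^n: c^{λ⁺}_{1|n}(k_1, k_2+1, …, k_n+1) = Σ q^{l₁p₁ + l₁ + l₃ + l₄ + ⋯ + l_n + p₂ + ⋯ + p_n} · binom_q(m₂; l₁,…,l_n) · binom_q(m₁; p₁,…,p_n), where the sum is over all l, p ∈ ℤ_{≥0}^n with l₁+⋯+l_n = m₂, p₁+⋯+p_n = m₁, and p_i + Σ_{α≠i} l_α = k_{i−1} for every 1 ≤ i ≤ n, with the convention k_0 := k_n. -/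

import Mathlib

open Finset

namespace CO

/-- The column diagram `dg'(λ)` of a composition, as a finset of boxes `(i, j)`,
`1 ≤ i ≤ n`, `1 ≤ j ≤ λ_i`. -/
def dgF (n : ℕ) (lam : ℕ → ℕ) : Finset (ℕ × ℕ) :=
  (Finset.Icc 1 n).biUnion fun i => (Finset.Icc 1 (lam i)).image fun j => (i, j)

/-- The augmented diagram `d̂g(λ)`: one extra box `(i, 0)` below each column. -/
def augF (n : ℕ) (lam : ℕ → ℕ) : Finset (ℕ × ℕ) :=
  dgF n lam ∪ (Finset.Icc 1 n).image fun i => (i, 0)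

/-- The box `d(u)` directly below a box. -/
def dbox (u : ℕ × ℕ) : ℕ × ℕ := (u.1, u.2 - 1)

/-- The augmented filling `σ̂`: equal to `σ` on positive rows and to `i` on `(i, 0)`. -/
def aug (σ : ℕ × ℕ → ℕ) (u : ℕ × ℕ) : ℕ := if u.2 = 0 then u.1 else σ u

/-- A filling takes values in `{1, …, n}` on the diagram. -/
def IsFilling (n : ℕ) (lam : ℕ → ℕ) (σ : ℕ × ℕ → ℕ) : Prop :=
  ∀ u ∈ dgF n lam, 1 ≤ σ u ∧ σ u ≤ n

/-- Attacking boxes: same row, or consecutive rows with the lower box to the right. -/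
def Attack (u v : ℕ × ℕ) : Prop :=
  u ≠ v ∧ (u.2 = v.2 ∨ (u.2 = v.2 + 1 ∧ u.1 < v.1) ∨ (v.2 = u.2 + 1 ∧ v.1 < u.1))

/-- A non-attacking filling: `σ̂` takes distinct values on attacking pairs of the
augmented diagram. -/
def NonAttacking (n : ℕ) (lam : ℕ → ℕ) (σ : ℕ × ℕ → ℕ) : Prop :=
  ∀ u ∈ augF n lam, ∀ v ∈ augF n lam, Attack u v → aug σ u ≠ aug σ v

/-- The arm of a box `u`. -/
def armF (n : ℕ) (lam : ℕ → ℕ) (u : ℕ × ℕ) : Finset (ℕ × ℕ) :=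
  ((dgF n lam).filter fun v => v.1 < u.1 ∧ v.2 = u.2 ∧ lam v.1 ≤ lam u.1) ∪
    ((augF n lam).filter fun v => u.1 < v.1 ∧ v.2 + 1 = u.2 ∧ lam v.1 < lam u.1)

/-- `a(u) = |arm(u)|`. -/
def armCard (n : ℕ) (lam : ℕ → ℕ) (u : ℕ × ℕ) : ℕ := (armF n lam u).card

/-- The number of inversions of `σ̂`: attacking pairs `u, u'` with `σ̂(u) < σ̂(u')`
and (same row with `u` to the left, or `u'` one row above `u` strictly to the left). -/
def invCard (n : ℕ) (lam : ℕ → ℕ) (σ : ℕ × ℕ → ℕ) : ℕ :=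
  ((augF n lam ×ˢ augF n lam).filter fun p =>
    aug σ p.1 < aug σ p.2 ∧
      ((p.1.2 = p.2.2 ∧ p.1.1 < p.2.1) ∨ (p.2.2 = p.1.2 + 1 ∧ p.2.1 < p.1.1))).card

/-- The descent set of `σ̂`. -/
def desF (n : ℕ) (lam : ℕ → ℕ) (σ : ℕ × ℕ → ℕ) : Finset (ℕ × ℕ) :=
  (dgF n lam).filter fun u => aug σ (dbox u) < aug σ u

/-- The statistic `coinv(σ̂)` (as an integer). -/
def coinv (n : ℕ) (lam : ℕ → ℕ) (σ : ℕ × ℕ → ℕ) : ℤ :=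
  (∑ u ∈ dgF n lam, (armCard n lam u : ℤ)) - invCard n lam σ +
    (((Finset.Icc 1 n ×ˢ Finset.Icc 1 n).filter fun p =>
      p.1 < p.2 ∧ lam p.1 ≤ lam p.2).card : ℤ) +
    ∑ u ∈ desF n lam σ, (armCard n lam u : ℤ)

/-- The statistic `T(σ)`. -/
def Tstat (n : ℕ) (lam : ℕ → ℕ) (σ : ℕ × ℕ → ℕ) : ℤ :=
  coinv n lam σ -
    ∑ u ∈ (dgF n lam).filter fun u => aug σ u ≠ aug σ (dbox u), (armCard n lam u : ℤ)

/-- Antidominant composition: `λ_1 ≤ ⋯ ≤ λ_n`. -/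
def Antidominant (n : ℕ) (lam : ℕ → ℕ) : Prop :=
  ∀ i j, 1 ≤ i → i ≤ j → j ≤ n → lam i ≤ lam j

/-- Appropriate filling: non-attacking with `T(σ) = 0`. -/
def Appropriate (n : ℕ) (lam : ℕ → ℕ) (σ : ℕ × ℕ → ℕ) : Prop :=
  IsFilling n lam σ ∧ NonAttacking n lam σ ∧ Tstat n lam σ = 0

/-- The operation `π` on compositions: `π(λ) = (λ_n + 1, λ_1, …, λ_{n-1})`. -/
def piComp (n : ℕ) (lam : ℕ → ℕ) : ℕ → ℕ :=
  fun i => if i = 1 then lam n + 1 else lam (i - 1)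

/-- The operation `π` on boxes. -/
def piBox (n : ℕ) (u : ℕ × ℕ) : ℕ × ℕ :=
  if u.1 < n then (u.1 + 1, u.2) else (1, u.2 + 1)

/-- Extension by zero of a function defined on the diagram. -/
def ext (n : ℕ) (lam : ℕ → ℕ) (f : {u // u ∈ dgF n lam} → ℕ) : ℕ × ℕ → ℕ :=
  fun u => if h : u ∈ dgF n lam then f ⟨u, h⟩ else 0

/-- `qstat(σ) = Σ (l(u) + 1)` over boxes `u` with `σ̂(u) < σ̂(d(u))`. -/
def qstat (n : ℕ) (lam : ℕ → ℕ) (σ : ℕ × ℕ → ℕ) : ℕ :=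
  ∑ u ∈ (dgF n lam).filter fun u => aug σ u < aug σ (dbox u), (lam u.1 - u.2 + 1)

end CO

namespace CO

/-- The statistic `asc(τ) = Σ (l(u) + 1)` over boxes `u = (i, j)` with `j ≥ 2` and
`τ(u) < τ(d(u))`. -/
def ascStat (n : ℕ) (mu : ℕ → ℕ) (τ : ℕ × ℕ → ℕ) : ℕ :=
  ∑ u ∈ (dgF n mu).filter fun u => 2 ≤ u.2 ∧ τ u < τ (dbox u), (mu u.1 - u.2 + 1)

/-- The greedy rule (iii): for boxes in rows `≥ 2`, with `S = τ(arm(u)) ∪ {τ(u)}`,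
`τ(u)` is the minimum of `{x ∈ S : x ≥ τ(d(u))}` if nonempty, and `min S` otherwise. -/
def GreedyRule (n : ℕ) (mu : ℕ → ℕ) (τ : ℕ × ℕ → ℕ) : Prop :=
  ∀ u ∈ dgF n mu, 2 ≤ u.2 →
    (({x ∈ τ '' ↑(armF n mu u) ∪ {τ u} | τ (dbox u) ≤ x}.Nonempty →
        τ u = sInf {x ∈ τ '' ↑(armF n mu u) ∪ {τ u} | τ (dbox u) ≤ x}) ∧
      (¬ {x ∈ τ '' ↑(armF n mu u) ∪ {τ u} | τ (dbox u) ≤ x}.Nonempty →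
        τ u = sInf (τ '' ↑(armF n mu u) ∪ {τ u})))

/-- Conditions (i)–(iv) on the fillings `τ` counted by `c_a^μ(k)`. -/
def CCond (n : ℕ) (mu : ℕ → ℕ) (a : ℕ → ℕ) (k : ℕ → ℕ) (τ : ℕ × ℕ → ℕ) : Prop :=
  (∀ u ∈ dgF n mu, 1 ≤ τ u ∧ τ u ≤ n) ∧
    (∀ j, (j, 1) ∈ dgF n mu → τ (j, 1) = a j) ∧
    (∀ u ∈ dgF n mu, ∀ v ∈ dgF n mu, Attack u v → τ u ≠ τ v) ∧
    GreedyRule n mu τ ∧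
    ∀ i, 1 ≤ i → i ≤ n → ((dgF n mu).filter fun u => τ u = i).card = k i

open Classical in
/-- The coefficient `c_a^μ(k) ∈ ℤ[q]`: the generating function `Σ_τ q^{asc(τ)}`
over fillings satisfying (i)–(iv). -/
noncomputable def cCoef (n : ℕ) (mu : ℕ → ℕ) (a : ℕ → ℕ) (k : ℕ → ℕ) : Polynomial ℤ :=
  ∑ f ∈ (Fintype.piFinset fun _ : {u // u ∈ dgF n mu} => Finset.Icc 1 n).filter
      fun f => CCond n mu a k (ext n mu f),
    Polynomial.X ^ ascStat n mu (ext n mu f)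

end CO

namespace CO

/-- Transport a `Fin n`-tuple to a function on `{1, …, n}` (1-based indexing). -/
def liftFin (n : ℕ) (k : Fin n → ℕ) : ℕ → ℕ :=
  fun i => if h : i - 1 < n then k ⟨i - 1, h⟩ else 0

/-- The statistic `stat(w)` on words with letters in `{1, …, n}`: the number of pairs
of positions `i < j` with either `w_i < w_j < n`, or `w_i = n` and `w_j < n`. -/
def wstat (n m : ℕ) (w : Fin m → ℕ) : ℕ :=
  ((Finset.univ ×ˢ Finset.univ : Finset (Fin m × Fin m)).filter fun p =>
    p.1 < p.2 ∧ ((w p.1 < w p.2 ∧ w p.2 < n) ∨ (w p.1 = n ∧ w p.2 < n))).card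

open Classical in
/-- The `q`-multinomial coefficient `binom_q(m; l)`, as the generating function of
`stat` over words of length `m` with letters in `{1, …, n}` and content `l`. -/
noncomputable def qMultinomial (n m : ℕ) (l : ℕ → ℕ) : Polynomial ℤ :=
  ∑ w ∈ (Fintype.piFinset fun _ : Fin m => Finset.Icc 1 n).filter
      fun w => ∀ t ∈ Finset.Icc 1 n, (Finset.univ.filter fun i => w i = t).card = l t,
    Polynomial.X ^ wstat n m w

end CO

namespace CO

/-- The bottom-row tuple defining `c^μ_{ã|b}` (for `s = n - 1`): entry `b` at
position `n`, and the elements of `{1, …, n} ∖ {ã, b}` in decreasing order at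
positions `2, …, n - 1`. -/
def aTuple (n atil b : ℕ) : ℕ → ℕ :=
  fun j => if j = n then b
    else ((((Finset.Icc 1 n).erase atil).erase b).sort (· ≤ ·)).getD (n - 1 - j) 0

/-- The coefficient `c^μ_{ã|b}(k)`. -/
noncomputable def cBar (n : ℕ) (mu : ℕ → ℕ) (atil b : ℕ) (k : ℕ → ℕ) : Polynomial ℤ :=
  cCoef n mu (aTuple n atil b) k

end CO

/-
The identity is proved in the fraction field of `ℤ[X]`, where `q`-factorials can be inverted.

On a bottom row that omits exactly one letter `z`, the greedy rule leaves exactly one choice for the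
next row once its missing letter `b` is given. It adds to `asc` one term when `z < b` and one when
the last column wraps around, and the last column advances cyclically only if it meets `b`. Summing
over `b` gives a recursion on the common height `m₂ + 1` of the columns, ending with a single column
whose generating function is a `q`-multinomial coefficient up to a power of `q`.

The right-hand side, with `p_i = l_i + k_{i-1} - m₂`, solves the same recursion: writing
`[m₂] = [l_1 + ⋯ + l_n]` as a cyclic `q`-sum over `b` lowers `l_b`, and what is left is that
`∑_l q ^ (l_v p_v) ∏ 1 / ([l_i]! [p_i]!)` does not depend on `v`. This holds because the factor
`q ^ (l_v p_v)` amounts to multiplying the generating function by the `q`-exponential series.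
-/

namespace CO

/-! ### `q`-factorials -/

section QFactorials

variable {K : Type*} [Field K] {q : K}

/-- The `q`-integer `[x] = (q ^ x - 1) / (q - 1)`, for `x` of either sign; it is only used for
`q ≠ 1`. -/
def qInt (q : K) (x : ℤ) : K := (q ^ x - 1) / (q - 1)

/-- The `q`-factorial `[m]! = [1] ⋯ [m]`. -/
def qFact (q : K) (m : ℕ) : K := ∏ i ∈ range m, qInt q (i + 1)

/-- The inverse `q`-factorial `1 / [x]!`, which vanishes for `x < 0`, so that
`[x] / [x]! = 1 / [x - 1]!` holds for every integer `x`. -/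
def qFactInv (q : K) (x : ℤ) : K := if x < 0 then 0 else (qFact q x.toNat)⁻¹

/-- A field element that can play the role of an indeterminate: it is neither zero nor a root of
unity. -/
structure IsGeneric (q : K) : Prop where
  ne_zero : q ≠ 0
  not_isOfFinOrder : ¬IsOfFinOrder q

lemma IsGeneric.sub_one_ne_zero (hq : IsGeneric q) : q - 1 ≠ 0 :=
  sub_ne_zero.2 fun h => hq.not_isOfFinOrder (h ▸ IsOfFinOrder.one)

lemma IsGeneric.qInt_succ_ne_zero (hq : IsGeneric q) (m : ℕ) : qInt q (m + 1) ≠ 0 := by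
  refine div_ne_zero (fun h => hq.not_isOfFinOrder ?_) hq.sub_one_ne_zero
  exact isOfFinOrder_iff_pow_eq_one.2 ⟨m + 1, m.succ_pos, by exact_mod_cast sub_eq_zero.1 h⟩

lemma qInt_zero (q : K) : qInt q 0 = 0 := by simp [qInt]

lemma qInt_add (hq : q ≠ 0) (x y : ℤ) : qInt q (x + y) = qInt q x + q ^ x * qInt q y := by
  rw [qInt, qInt, qInt, zpow_add₀ hq]
  ring

lemma qFact_zero (q : K) : qFact q 0 = 1 := by simp [qFact]

lemma qFact_succ (q : K) (m : ℕ) : qFact q (m + 1) = qFact q m * qInt q (m + 1) :=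
  prod_range_succ _ m

lemma qFactInv_of_neg (q : K) {x : ℤ} (hx : x < 0) : qFactInv q x = 0 := if_pos hx

lemma qFactInv_natCast (q : K) (m : ℕ) : qFactInv q m = (qFact q m)⁻¹ := by simp [qFactInv]

lemma qFactInv_zero (q : K) : qFactInv q 0 = 1 := by simp [qFactInv, qFact_zero]

lemma qInt_mul_qFactInv (hq : IsGeneric q) (x : ℤ) :
    qInt q x * qFactInv q x = qFactInv q (x - 1) := by
  rcases lt_trichotomy x 0 with hx | rfl | hx
  · rw [qFactInv_of_neg q hx, qFactInv_of_neg q (by lia), mul_zero]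
  · rw [qInt_zero, qFactInv_of_neg q (x := 0 - 1) (by lia), zero_mul]
  · obtain ⟨m, rfl⟩ : ∃ m : ℕ, x = (m + 1 : ℕ) := ⟨(x - 1).toNat, by lia⟩
    have hm : ((m + 1 : ℕ) : ℤ) - 1 = m := by lia
    rw [hm, qFactInv_natCast, qFactInv_natCast, qFact_succ, mul_inv_rev, Nat.cast_succ,
      mul_inv_cancel_left₀ (hq.qInt_succ_ne_zero m)]

lemma sum_Ico_zpow_mul_qInt (hq : q ≠ 0) (x : ℕ → ℤ) {u v : ℕ} (huv : u ≤ v) :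
    ∑ c ∈ Ico u v, q ^ (∑ i ∈ Ico u c, x i) * qInt q (x c) = qInt q (∑ i ∈ Ico u v, x i) := by
  induction v, huv using Nat.le_induction with
  | base => simp [qInt_zero]
  | succ v huv ih => rw [sum_Ico_succ_top huv, sum_Ico_succ_top huv, ih, qInt_add hq]

lemma sum_Ioc_zpow_mul_qInt (hq : q ≠ 0) (x : ℕ → ℤ) {u v : ℕ} (huv : u ≤ v) :
    ∑ c ∈ Ioc u v, q ^ (∑ i ∈ Ioc c v, x i) * qInt q (x c) = qInt q (∑ i ∈ Ioc u v, x i) := by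
  induction v, huv using Nat.le_induction with
  | base => simp [qInt_zero]
  | succ v huv ih =>
    have shift : ∀ c ∈ Ioc u v, q ^ (∑ i ∈ Ioc c (v + 1), x i) * qInt q (x c) =
        q ^ x (v + 1) * (q ^ (∑ i ∈ Ioc c v, x i) * qInt q (x c)) := fun c hc => by
      rw [sum_Ioc_succ_top (mem_Ioc.1 hc).2, add_comm, zpow_add₀ hq, mul_assoc]
    rw [sum_Ioc_succ_top huv, sum_Ioc_succ_top huv, sum_congr rfl shift, ← mul_sum, ih,
      add_comm (∑ i ∈ Ioc u v, x i), qInt_add hq, Ioc_self, sum_empty, zpow_zero, one_mul, add_comm]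

lemma sum_Ico_add_sum_Ioc (x : ℕ → ℤ) {n v : ℕ} (hv : v ∈ Icc 1 n) :
    ∑ i ∈ Ico 1 (v + 1), x i + ∑ i ∈ Ioc v n, x i = ∑ i ∈ Icc 1 n, x i :=
  sum_Ioc_consecutive x v.zero_le (mem_Icc.1 hv).2

lemma sum_cyclic_prefix_zpow_mul_qInt (hq : q ≠ 0) (x : ℕ → ℤ) {n v : ℕ} (hv : v ∈ Icc 1 n) :
    ∑ c ∈ Icc 1 n, q ^ ((if c < v then ∑ i ∈ Icc 1 n, x i else 0) + ∑ i ∈ Ico 1 c, x i) *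
        qInt q (x c) =
      q ^ (∑ i ∈ Ico 1 v, x i) * qInt q (∑ i ∈ Icc 1 n, x i) := by
  have hvn := mem_Icc.1 hv
  have split : ∑ i ∈ Icc 1 n, x i = ∑ i ∈ Ico v (n + 1), x i + ∑ i ∈ Ico 1 v, x i := by
    rw [add_comm]; exact (sum_Ico_consecutive x hvn.1 (by lia : v ≤ n + 1)).symm
  have low : ∀ c ∈ Ico 1 v, q ^ ((if c < v then ∑ i ∈ Icc 1 n, x i else 0) +
      ∑ i ∈ Ico 1 c, x i) * qInt q (x c) =
      q ^ (∑ i ∈ Icc 1 n, x i) * (q ^ (∑ i ∈ Ico 1 c, x i) * qInt q (x c)) := fun c hc => by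
    rw [if_pos (mem_Ico.1 hc).2, zpow_add₀ hq, mul_assoc]
  have high : ∀ c ∈ Ico v (n + 1), q ^ ((if c < v then ∑ i ∈ Icc 1 n, x i else 0) +
      ∑ i ∈ Ico 1 c, x i) * qInt q (x c) =
      q ^ (∑ i ∈ Ico 1 v, x i) * (q ^ (∑ i ∈ Ico v c, x i) * qInt q (x c)) := fun c hc => by
    rw [if_neg (mem_Ico.1 hc).1.not_gt, zero_add,
      ← sum_Ico_consecutive x hvn.1 (mem_Ico.1 hc).1, zpow_add₀ hq, mul_assoc]
  calc _ = q ^ (∑ i ∈ Icc 1 n, x i) * qInt q (∑ i ∈ Ico 1 v, x i) +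
        q ^ (∑ i ∈ Ico 1 v, x i) * qInt q (∑ i ∈ Ico v (n + 1), x i) := by
        rw [← sum_Ico_zpow_mul_qInt hq x hvn.1, mul_sum, ← sum_congr rfl low,
          ← sum_Ico_zpow_mul_qInt hq x (by lia : v ≤ n + 1), mul_sum, ← sum_congr rfl high]
        exact (sum_Ico_consecutive _ hvn.1 (by lia : v ≤ n + 1)).symm
    _ = _ := by
        rw [split, qInt_add hq, zpow_add₀ hq]
        ring

lemma sum_cyclic_suffix_zpow_mul_qInt (hq : q ≠ 0) (x : ℕ → ℤ) {n a : ℕ} (ha : a ∈ Icc 1 n) :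
    ∑ b ∈ Icc 1 n, q ^ ((if a < b then ∑ i ∈ Icc 1 n, x i else 0) + ∑ i ∈ Ioc b n, x i) *
        qInt q (x b) =
      q ^ (∑ i ∈ Ioc a n, x i) * qInt q (∑ i ∈ Icc 1 n, x i) := by
  have han := (mem_Icc.1 ha).2
  have split : ∑ i ∈ Icc 1 n, x i = ∑ i ∈ Ioc 0 a, x i + ∑ i ∈ Ioc a n, x i :=
    (sum_Ioc_consecutive x (Nat.zero_le a) han).symm
  have low : ∀ b ∈ Ioc 0 a, q ^ ((if a < b then ∑ i ∈ Icc 1 n, x i else 0) +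
      ∑ i ∈ Ioc b n, x i) * qInt q (x b) =
      q ^ (∑ i ∈ Ioc a n, x i) * (q ^ (∑ i ∈ Ioc b a, x i) * qInt q (x b)) := fun b hb => by
    rw [if_neg (mem_Ioc.1 hb).2.not_gt, zero_add,
      ← sum_Ioc_consecutive x (mem_Ioc.1 hb).2 han, add_comm, zpow_add₀ hq, mul_assoc]
  have high : ∀ b ∈ Ioc a n, q ^ ((if a < b then ∑ i ∈ Icc 1 n, x i else 0) +
      ∑ i ∈ Ioc b n, x i) * qInt q (x b) =
      q ^ (∑ i ∈ Icc 1 n, x i) * (q ^ (∑ i ∈ Ioc b n, x i) * qInt q (x b)) := fun b hb => by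
    rw [if_pos (mem_Ioc.1 hb).1, zpow_add₀ hq, mul_assoc]
  calc _ = q ^ (∑ i ∈ Ioc a n, x i) * qInt q (∑ i ∈ Ioc 0 a, x i) +
        q ^ (∑ i ∈ Icc 1 n, x i) * qInt q (∑ i ∈ Ioc a n, x i) := by
        rw [← sum_Ioc_zpow_mul_qInt hq x (Nat.zero_le a), mul_sum, ← sum_congr rfl low,
          ← sum_Ioc_zpow_mul_qInt hq x han, mul_sum, ← sum_congr rfl high]
        exact (sum_Ioc_consecutive _ (Nat.zero_le a) han).symm
    _ = _ := by
        rw [split, qInt_add hq, zpow_add₀ hq]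
        ring

/-- The coefficients of the `q`-exponential series `∑ q ^ (i choose 2) ((q - 1) X) ^ i / [i]!`. -/
def qExpCoeff (q : K) (i : ℕ) : K := q ^ i.choose 2 * (q - 1) ^ i * qFactInv q i

lemma qInt_mul_qExpCoeff_succ (hq : IsGeneric q) (i : ℕ) :
    qInt q (i + 1) * qExpCoeff q (i + 1) = (q - 1) * q ^ i * qExpCoeff q i := by
  have h := qInt_mul_qFactInv hq ((i + 1 : ℕ) : ℤ)
  push_cast at h
  rw [add_sub_cancel_right] at h
  rw [qExpCoeff, qExpCoeff, Nat.choose_succ_succ', Nat.choose_one_right, ← h]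
  push_cast
  ring

/-- The product of the `q`-exponential series with `∑ X ^ j / ([j]! [j + d]!)`, the `q`-Bessel
function of the first kind; it turns out to be the one of the second kind. -/
def qBesselConvolution (q : K) (N : ℕ) (d : ℤ) : K :=
  ∑ p ∈ antidiagonal N, qExpCoeff q p.1 * (qFactInv q p.2 * qFactInv q (p.2 + d))

lemma qInt_mul_qBesselConvolution_succ (hq : IsGeneric q) (N : ℕ) (d : ℤ) :
    qInt q (N + 1) * qBesselConvolution q (N + 1) d =
      q ^ ((N : ℤ) + 1 + d) * qBesselConvolution q N (d + 1) := by
  have split : ∀ p ∈ antidiagonal (N + 1),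
      qInt q (N + 1) * (qExpCoeff q p.1 * (qFactInv q p.2 * qFactInv q (p.2 + d))) =
        qInt q p.1 * qExpCoeff q p.1 * (qFactInv q p.2 * qFactInv q (p.2 + d)) +
        q ^ p.1 * qExpCoeff q p.1 * (qInt q p.2 * qFactInv q p.2 * qFactInv q (p.2 + d)) := by
    intro p hp
    have hN : (N : ℤ) + 1 = p.1 + p.2 := by exact_mod_cast (mem_antidiagonal.1 hp).symm
    rw [hN, qInt_add hq.ne_zero, zpow_natCast]
    ring
  rw [qBesselConvolution, mul_sum, sum_congr rfl split, sum_add_distrib,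
    Nat.sum_antidiagonal_succ, Nat.sum_antidiagonal_succ', qBesselConvolution, mul_sum]
  simp only [Nat.cast_zero, Nat.cast_add, Nat.cast_one, qInt_zero, zero_mul, mul_zero, zero_add,
    ← sum_add_distrib]
  refine sum_congr rfl fun p hp => ?_
  have hN : (N : ℤ) + 1 + d = p.1 + (p.2 + 1 + d) := by
    rw [← mem_antidiagonal.1 hp]; push_cast; ring
  have hstep := qInt_mul_qFactInv hq ((p.2 : ℤ) + 1 + d)
  have hpow : (q - 1) * qInt q ((p.2 : ℤ) + 1 + d) = q ^ ((p.2 : ℤ) + 1 + d) - 1 :=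
    mul_div_cancel₀ _ hq.sub_one_ne_zero
  rw [show (p.2 : ℤ) + 1 + d - 1 = p.2 + d by ring] at hstep
  rw [qInt_mul_qExpCoeff_succ hq, qInt_mul_qFactInv hq, add_sub_cancel_right, ← hstep, hN,
    zpow_add₀ hq.ne_zero, zpow_natCast, show (p.2 : ℤ) + (d + 1) = p.2 + 1 + d by ring]
  linear_combination (q ^ p.1 * qExpCoeff q p.1 * qFactInv q p.2 *
    qFactInv q ((p.2 : ℤ) + 1 + d)) * hpow

lemma qBesselConvolution_eq (hq : IsGeneric q) (N : ℕ) (d : ℤ) :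
    qBesselConvolution q N d = q ^ ((N : ℤ) * (N + d)) * (qFactInv q N * qFactInv q (N + d)) := by
  induction N generalizing d with
  | zero => simp [qBesselConvolution, qExpCoeff, qFactInv_zero]
  | succ N ih =>
    have hstep := qInt_mul_qFactInv hq ((N + 1 : ℕ) : ℤ)
    refine mul_left_cancel₀ (hq.qInt_succ_ne_zero N) ?_
    rw [qInt_mul_qBesselConvolution_succ hq, ih]
    push_cast at hstep ⊢
    rw [add_sub_cancel_right] at hstep
    rw [← hstep, ← mul_assoc, ← zpow_add₀ hq.ne_zero, show (N : ℤ) + (d + 1) = N + 1 + d by ring,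
      show (N : ℤ) + 1 + d + N * (N + 1 + d) = (N + 1) * (N + 1 + d) by ring]
    ring

lemma sum_piAntidiag_prod_coeff {ι R : Type*} [DecidableEq ι] [CommSemiring R] (S : Finset ι)
    (m : ℕ) (f : ι → PowerSeries R) :
    ∑ s ∈ piAntidiag S m, ∏ i ∈ S, PowerSeries.coeff (s i) (f i) =
      PowerSeries.coeff m (∏ i ∈ S, f i) := by
  rw [PowerSeries.coeff_prod, finsuppAntidiag, sum_map]
  exact (sum_attach _ fun s : ι → ℕ => ∏ i ∈ S, PowerSeries.coeff (s i) (f i)).symm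

/-- The weight `∏ 1 / ([s i]! [s i + d i]!)` of a multiplicity vector `s` with displacements
`d`. -/
def pairWeight {ι : Type*} (q : K) (S : Finset ι) (d : ι → ℤ) (s : ι → ℕ) : K :=
  ∏ i ∈ S, qFactInv q (s i) * qFactInv q (s i + d i)

/- The factor `q ^ (s v * (s v + d v))` multiplies the generating series of the `v`-th coordinate
by the `q`-exponential, whatever `v` is. -/
lemma sum_zpow_mul_pairWeight_comm {ι : Type*} [DecidableEq ι] (hq : IsGeneric q) (S : Finset ι)
    (m : ℕ) (d : ι → ℤ) {v w : ι} (hv : v ∈ S) (hw : w ∈ S) :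
    ∑ s ∈ piAntidiag S m, q ^ ((s v : ℤ) * (s v + d v)) * pairWeight q S d s =
      ∑ s ∈ piAntidiag S m, q ^ ((s w : ℤ) * (s w + d w)) * pairWeight q S d s := by
  let bessel (i : ι) : PowerSeries K := .mk fun j => qFactInv q j * qFactInv q (j + d i)
  have key : ∀ u ∈ S,
      ∑ s ∈ piAntidiag S m, q ^ ((s u : ℤ) * (s u + d u)) * pairWeight q S d s =
        PowerSeries.coeff m (.mk (qExpCoeff q) * ∏ i ∈ S, bessel i) := by
    intro u hu
    rw [← mul_prod_erase S bessel hu, ← mul_assoc, ← sdiff_singleton_eq_erase,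
      ← prod_update_of_mem hu, ← sum_piAntidiag_prod_coeff]
    refine sum_congr rfl fun s _ => ?_
    rw [pairWeight, ← mul_prod_erase S _ hu, ← mul_prod_erase S _ hu, ← mul_assoc,
      Function.update_self, PowerSeries.coeff_mul]
    congr 1
    · rw [← qBesselConvolution_eq hq]
      simp [qBesselConvolution, bessel]
    · exact prod_congr rfl fun i hi => by simp [bessel, (mem_erase.1 hi).1]
  rw [key v hv, key w hw]

end QFactorials

/-! ### The recursion for the closed form -/

section ClosedForm

variable {K : Type*} [Field K] {q : K}

lemma cast_add_single (s : ℕ → ℕ) (b i : ℕ) :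
    ((s + Pi.single b 1 : ℕ → ℕ) i : ℤ) = s i + (Pi.single b 1 : ℕ → ℤ) i := by
  by_cases h : i = b
  · simp [h]
  · simp [h]

lemma sum_piAntidiag_succ {ι M : Type*} [DecidableEq ι] [AddCommMonoid M] {S : Finset ι} {b : ι}
    (hb : b ∈ S) (m : ℕ) (f : (ι → ℕ) → M) (hf : ∀ l, l b = 0 → f l = 0) :
    ∑ l ∈ piAntidiag S (m + 1), f l = ∑ s ∈ piAntidiag S m, f (s + Pi.single b 1) := by
  have hsingle : ∑ i ∈ S, (Pi.single b 1 : ι → ℕ) i = 1 := by simp [Pi.single_apply, hb]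
  refine (sum_of_injOn (· + Pi.single b 1) (add_left_injective _).injOn ?_ ?_ fun _ _ => rfl).symm
  · intro s hs
    rw [mem_coe, mem_piAntidiag] at hs ⊢
    refine ⟨by rw [sum_congr rfl fun i _ => Pi.add_apply s _ i, sum_add_distrib, hs.1, hsingle], ?_⟩
    intro i hi
    by_cases hib : i = b
    · exact hib ▸ hb
    · exact hs.2 i (by simpa [hib] using hi)
  · intro l hl hmem
    refine hf l (by_contra fun hlb => hmem ⟨l - Pi.single b 1, ?_, ?_⟩)
    · have hle : Pi.single b 1 ≤ l := by
        intro i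
        by_cases hib : i = b
        · subst hib; simpa using Nat.one_le_iff_ne_zero.2 hlb
        · simp [hib]
      rw [mem_piAntidiag] at hl
      rw [mem_coe, mem_piAntidiag]
      refine ⟨?_, fun i hi => hl.2 i fun h0 => hi (by simp [h0])⟩
      have := hl.1
      rw [← tsub_add_cancel_of_le hle, sum_congr rfl fun i _ => Pi.add_apply (l - _) _ i,
        sum_add_distrib, hsingle] at this
      simpa using this
    · funext i
      by_cases hib : i = b
      · subst hib
        simp only [Pi.add_apply, Pi.sub_apply, Pi.single_eq_same]
        lia
      · simp [hib]

lemma qInt_mul_pairWeight_add_single (hq : IsGeneric q) {S : Finset ℕ} {b : ℕ} (hb : b ∈ S)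
    (d : ℕ → ℤ) (s : ℕ → ℕ) :
    qInt q ((s + Pi.single b 1 : ℕ → ℕ) b) * pairWeight q S d (s + Pi.single b 1) =
      pairWeight q S (d + Pi.single b 1) s := by
  have others : ∏ i ∈ S.erase b, qFactInv q ((s + Pi.single b 1 : ℕ → ℕ) i) *
      qFactInv q (((s + Pi.single b 1 : ℕ → ℕ) i) + d i) =
      ∏ i ∈ S.erase b, qFactInv q (s i) * qFactInv q (s i + (d + Pi.single b 1 : ℕ → ℤ) i) :=
    prod_congr rfl fun i hi => by simp [(mem_erase.1 hi).1]
  rw [pairWeight, pairWeight, ← mul_prod_erase S _ hb, ← mul_prod_erase S _ hb, others,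
    ← mul_assoc, ← mul_assoc, qInt_mul_qFactInv hq, cast_add_single, Pi.single_eq_same,
    add_sub_cancel_right, Pi.add_apply, Pi.single_eq_same, add_right_comm, add_assoc]

/-- The exponent of `q` attached to the multiplicity vector `l` in `closedForm`. -/
def closedExponent (n a v : ℕ) (d : ℕ → ℤ) (l : ℕ → ℕ) : ℤ :=
  ∑ i ∈ Ioc a n, (l i : ℤ) + ∑ i ∈ Ico 1 v, (l i + d i) + l v * (l v + d v)

/-- The sum over multiplicity vectors in `closedForm`. -/
def closedSum (q : K) (n m a v : ℕ) (d : ℕ → ℤ) : K :=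
  ∑ l ∈ piAntidiag (Icc 1 n) m, q ^ closedExponent n a v d l * pairWeight q (Icc 1 n) d l

/-- The closed form of the generating function of the admissible fillings of a diagram whose
columns `2, …, n - 1` have height `m + 1` and whose last column is at least as high: `a` is the
letter missing from the bottom row, `v` the bottom letter of the last column, and `m + d t` is the
multiplicity of the letter `t` above the bottom row. -/
def closedForm (q : K) (n m a v : ℕ) (d : ℕ → ℤ) : K :=
  qFact q m * qFact q (m + ∑ i ∈ Icc 1 n, d i).toNat * closedSum q n m a v d

/-- The letter above a letter `v` in the last column, when the row above misses the letter `b`: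
the first letter other than `b` in the cyclic order `v, v + 1, …, n, 1, …`. -/
def advance (n v b : ℕ) : ℕ := if b = v then if v = n then 1 else v + 1 else v

lemma advance_mem_Icc {n v : ℕ} (hv : v ∈ Icc 1 n) (b : ℕ) : advance n v b ∈ Icc 1 n := by
  rw [mem_Icc] at *
  unfold advance
  split_ifs <;> lia

lemma closedExponent_add_single {n b v : ℕ} (d : ℕ → ℤ) (s : ℕ → ℕ) :
    closedExponent n b v d (s + Pi.single b 1) =
      closedExponent n b v (d + Pi.single b 1) s +
        if b = v then s v + (d + Pi.single b 1 : ℕ → ℤ) v else 0 := by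
  have hIoc : ∑ i ∈ Ioc b n, ((s + Pi.single b 1 : ℕ → ℕ) i : ℤ) = ∑ i ∈ Ioc b n, (s i : ℤ) :=
    sum_congr rfl fun i hi => by simp [(mem_Ioc.1 hi).1.ne']
  have hIco : ∑ i ∈ Ico 1 v, (((s + Pi.single b 1 : ℕ → ℕ) i : ℤ) + d i) =
      ∑ i ∈ Ico 1 v, (s i + (d + Pi.single b 1 : ℕ → ℤ) i) :=
    sum_congr rfl fun i _ => by rw [cast_add_single, Pi.add_apply]; ring
  rw [closedExponent, closedExponent, hIoc, hIco]
  split_ifs with h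
  · subst h
    simp only [Pi.add_apply, Pi.single_eq_same, Nat.cast_add, Nat.cast_one]
    ring
  · simp [Ne.symm h]

lemma sum_Ioc_add_sum_Ico_of_mem_piAntidiag {n m v : ℕ} (hv : v ∈ Icc 1 n) (d : ℕ → ℤ)
    {s : ℕ → ℕ} (hs : s ∈ piAntidiag (Icc 1 n) m) :
    ∑ i ∈ Ioc v n, (s i : ℤ) + ∑ i ∈ Ico 1 (v + 1), (s i + d i) =
      m + ∑ i ∈ Ico 1 (v + 1), d i := by
  have htotal : ∑ i ∈ Icc 1 n, (s i : ℤ) = m := by exact_mod_cast (mem_piAntidiag.1 hs).1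
  rw [sum_add_distrib, ← htotal, ← sum_Ico_add_sum_Ioc (fun i => (s i : ℤ)) hv]
  ring

lemma closedExponent_add_of_mem_piAntidiag {n m v : ℕ} (hv : v ∈ Icc 1 n) (d : ℕ → ℤ)
    {s : ℕ → ℕ} (hs : s ∈ piAntidiag (Icc 1 n) m) :
    closedExponent n v v d s + (s v + d v) =
      m + ∑ i ∈ Ico 1 (v + 1), d i + s v * (s v + d v) := by
  rw [← sum_Ioc_add_sum_Ico_of_mem_piAntidiag hv d hs, closedExponent,
    sum_Ico_succ_top (mem_Icc.1 hv).1]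
  ring

lemma closedExponent_advance_of_mem_piAntidiag {n m v : ℕ} (hv : v ∈ Icc 1 n) (d : ℕ → ℤ)
    {s : ℕ → ℕ} (hs : s ∈ piAntidiag (Icc 1 n) m) :
    (if v = n then m + ∑ i ∈ Icc 1 n, d i else 0) + closedExponent n v (advance n v v) d s =
      m + ∑ i ∈ Ico 1 (v + 1), d i +
        s (advance n v v) * (s (advance n v v) + d (advance n v v)) := by
  by_cases hvn : v = n
  · subst hvn
    have hadv : advance v v v = 1 := by simp [advance]
    simp only [if_pos, hadv, closedExponent, Ioc_self, Ico_self, sum_empty, zero_add]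
    rfl
  · have hadv : advance n v v = v + 1 := by simp [advance, hvn]
    rw [if_neg hvn, zero_add, hadv, closedExponent, sum_Ioc_add_sum_Ico_of_mem_piAntidiag hv d hs]

lemma sum_zpow_closedExponent_mul_qInt (hq : IsGeneric q) {n b v : ℕ} (hb : b ∈ Icc 1 n)
    (hv : v ∈ Icc 1 n) (m : ℕ) (d : ℕ → ℤ) :
    ∑ l ∈ piAntidiag (Icc 1 n) (m + 1),
        q ^ closedExponent n b v d l * (qInt q (l b) * pairWeight q (Icc 1 n) d l) =
      q ^ (if b = v ∧ v = n then m + ∑ i ∈ Icc 1 n, (d + Pi.single b 1 : ℕ → ℤ) i else 0) *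
        closedSum q n m b (advance n v b) (d + Pi.single b 1) := by
  rw [sum_piAntidiag_succ hb m _ fun l hl => by simp [hl, qInt_zero], closedSum]
  simp only [qInt_mul_pairWeight_add_single hq hb, closedExponent_add_single]
  set d' : ℕ → ℤ := d + Pi.single b 1
  by_cases hbv : b = v
  · subst hbv
    calc _ = q ^ (m + ∑ i ∈ Ico 1 (b + 1), d' i) * ∑ s ∈ piAntidiag (Icc 1 n) m,
            q ^ ((s b : ℤ) * (s b + d' b)) * pairWeight q (Icc 1 n) d' s := by
          rw [mul_sum]
          refine sum_congr rfl fun s hs => ?_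
          rw [if_pos rfl, closedExponent_add_of_mem_piAntidiag hv d' hs, zpow_add₀ hq.ne_zero,
            mul_assoc]
      _ = _ := by
          rw [sum_zpow_mul_pairWeight_comm hq _ m d' hb (advance_mem_Icc hb b), mul_sum, mul_sum]
          refine sum_congr rfl fun s hs => ?_
          rw [← mul_assoc, ← mul_assoc, ← zpow_add₀ hq.ne_zero, ← zpow_add₀ hq.ne_zero,
            ← closedExponent_advance_of_mem_piAntidiag hv d' hs]
          simp only [true_and]
  · simp [hbv, advance]

lemma sum_Icc_add_single {n b : ℕ} (hb : b ∈ Icc 1 n) (d : ℕ → ℤ) :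
    ∑ i ∈ Icc 1 n, (d + Pi.single b 1 : ℕ → ℤ) i = ∑ i ∈ Icc 1 n, d i + 1 := by
  simp [sum_add_distrib, Pi.single_apply, (mem_Icc.1 hb)]

lemma qInt_mul_closedSum_succ (hq : IsGeneric q) {n a v : ℕ} (ha : a ∈ Icc 1 n) (m : ℕ)
    (d : ℕ → ℤ) :
    qInt q (m + 1) * closedSum q n (m + 1) a v d = ∑ b ∈ Icc 1 n,
      q ^ (if a < b then (m : ℤ) + 1 else 0) * ∑ l ∈ piAntidiag (Icc 1 n) (m + 1),
        q ^ closedExponent n b v d l * (qInt q (l b) * pairWeight q (Icc 1 n) d l) := by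
  simp only [mul_sum, closedSum]
  rw [sum_comm]
  refine sum_congr rfl fun l hl => ?_
  have htotal : ∑ i ∈ Icc 1 n, (l i : ℤ) = m + 1 := by exact_mod_cast (mem_piAntidiag.1 hl).1
  have hsuffix := sum_cyclic_suffix_zpow_mul_qInt hq.ne_zero (fun i => (l i : ℤ)) ha
  rw [htotal] at hsuffix
  calc _ = (q ^ (∑ i ∈ Ioc a n, (l i : ℤ)) * qInt q (m + 1)) *
        (q ^ (∑ i ∈ Ico 1 v, (l i + d i) + l v * (l v + d v)) * pairWeight q (Icc 1 n) d l) := by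
        rw [closedExponent, add_assoc, zpow_add₀ hq.ne_zero]
        ring
    _ = _ := by
        rw [← hsuffix, sum_mul]
        refine sum_congr rfl fun b _ => ?_
        rw [closedExponent, add_assoc (∑ i ∈ Ioc b n, (l i : ℤ)), zpow_add₀ hq.ne_zero,
          zpow_add₀ hq.ne_zero (∑ i ∈ Ioc b n, (l i : ℤ))]
        ring

lemma closedForm_succ (hq : IsGeneric q) {n a v : ℕ} (ha : a ∈ Icc 1 n) (hv : v ∈ Icc 1 n)
    (m : ℕ) (d : ℕ → ℤ) :
    closedForm q n (m + 1) a v d = ∑ b ∈ Icc 1 n,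
      q ^ ((if a < b then (m : ℤ) + 1 else 0) +
          if b = v ∧ v = n then (m : ℤ) + 1 + ∑ i ∈ Icc 1 n, d i else 0) *
        closedForm q n m b (advance n v b) (d + Pi.single b 1) := by
  rw [closedForm, qFact_succ]
  calc _ = qFact q m * qFact q ((m + 1 : ℕ) + ∑ i ∈ Icc 1 n, d i).toNat *
        (qInt q (m + 1) * closedSum q n (m + 1) a v d) := by ring
    _ = _ := by
      rw [qInt_mul_closedSum_succ hq ha, mul_sum]
      refine sum_congr rfl fun b hb => ?_
      have htotal : (m : ℤ) + ∑ i ∈ Icc 1 n, (d + Pi.single b 1 : ℕ → ℤ) i =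
          m + 1 + ∑ i ∈ Icc 1 n, d i := by
        rw [sum_Icc_add_single hb]; ring
      rw [sum_zpow_closedExponent_mul_qInt hq hb hv, closedForm, htotal, zpow_add₀ hq.ne_zero]
      push_cast
      ring

lemma closedForm_zero (q : K) (n a v : ℕ) (d : ℕ → ℤ) :
    closedForm q n 0 a v d = q ^ (∑ i ∈ Ico 1 v, d i) *
      (qFact q (∑ i ∈ Icc 1 n, d i).toNat * ∏ i ∈ Icc 1 n, qFactInv q (d i)) := by
  simp only [closedForm, closedSum, closedExponent, pairWeight, piAntidiag_zero, sum_singleton,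
    Pi.zero_apply, Nat.cast_zero, sum_const_zero, qFact_zero, qFactInv_zero, zero_mul, one_mul,
    zero_add, add_zero]
  ring

end ClosedForm

/-! ### `q`-multinomial coefficients -/

section QMultinomials

variable {K : Type*} [Field K] {q : K}

lemma prod_qFactInv_sub_single {ι : Type*} [DecidableEq ι] (hq : IsGeneric q) {S : Finset ι} {c : ι}
    (hc : c ∈ S) (l : ι → ℤ) :
    ∏ i ∈ S, qFactInv q ((l - Pi.single c 1 : ι → ℤ) i) =
      qInt q (l c) * ∏ i ∈ S, qFactInv q (l i) := by
  have others : ∏ i ∈ S.erase c, qFactInv q ((l - Pi.single c 1 : ι → ℤ) i) =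
      ∏ i ∈ S.erase c, qFactInv q (l i) :=
    prod_congr rfl fun i hi => by simp [(mem_erase.1 hi).1]
  rw [← mul_prod_erase S _ hc, ← mul_prod_erase S _ hc, others, ← mul_assoc,
    qInt_mul_qFactInv hq, Pi.sub_apply, Pi.single_eq_same]

lemma prod_qFactInv_of_sum_eq_zero {ι : Type*} (q : K) {S : Finset ι} {l : ι → ℤ}
    (hl : ∑ i ∈ S, l i = 0) :
    ∏ i ∈ S, qFactInv q (l i) = if ∀ i ∈ S, l i = 0 then 1 else 0 := by
  split_ifs with h
  · exact prod_eq_one fun i hi => by rw [h i hi, qFactInv_zero]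
  · obtain ⟨i, hi, hneg⟩ : ∃ i ∈ S, l i < 0 := by
      by_contra! hnonneg
      exact h ((sum_eq_zero_iff_of_nonneg hnonneg).1 hl)
    exact prod_eq_zero hi (qFactInv_of_neg q hneg)

/-- The letters `t` for which a letter `c` followed by `t` contributes to `wstat`. -/
def invertedLetters (n c : ℕ) : Finset ℕ := if c = n then Ico 1 n else Ioo c n

lemma notMem_invertedLetters (n c : ℕ) : c ∉ invertedLetters n c := by
  unfold invertedLetters
  split_ifs with h <;> simp [h]

lemma invertedLetters_subset_Icc {n c : ℕ} (hc : c ∈ Icc 1 n) : invertedLetters n c ⊆ Icc 1 n := by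
  intro t
  have := mem_Icc.1 hc
  unfold invertedLetters
  split_ifs <;> simp only [mem_Ico, mem_Ioo, mem_Icc] <;> lia

lemma mem_invertedLetters {n t : ℕ} (ht : t ∈ Icc 1 n) (c : ℕ) :
    t ∈ invertedLetters n c ↔ (c < t ∧ t < n) ∨ (c = n ∧ t < n) := by
  have := mem_Icc.1 ht
  unfold invertedLetters
  split_ifs with h <;> simp only [mem_Ico, mem_Ioo] <;> lia

lemma sum_zpow_invertedLetters_mul_qInt (hq : q ≠ 0) (n : ℕ) (x : ℕ → ℤ) :
    ∑ c ∈ Icc 1 n, q ^ (∑ t ∈ invertedLetters n c, x t) * qInt q (x c) =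
      qInt q (∑ c ∈ Icc 1 n, x c) := by
  rcases n with _ | n
  · simp [qInt_zero]
  · have small : ∀ c ∈ Ioc 0 n, q ^ (∑ t ∈ invertedLetters (n + 1) c, x t) * qInt q (x c) =
        q ^ (∑ t ∈ Ioc c n, x t) * qInt q (x c) := fun c hc => by
      rw [invertedLetters, if_neg (by have := (mem_Ioc.1 hc).2; lia), Ioo_add_one_right_eq_Ioc]
    have top : invertedLetters (n + 1) (n + 1) = Ioc 0 n := if_pos rfl
    change ∑ c ∈ Ioc 0 (n + 1), _ = qInt q (∑ c ∈ Ioc 0 (n + 1), x c)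
    rw [sum_Ioc_succ_top n.zero_le, sum_Ioc_succ_top n.zero_le, sum_congr rfl small,
      sum_Ioc_zpow_mul_qInt hq x n.zero_le, top, qInt_add hq]

/-- The multiplicity of the letter `t` in the word `w`. -/
def letterCount {m : ℕ} (w : Fin m → ℕ) (t : ℕ) : ℕ := #{i | w i = t}

lemma letterCount_cons {m : ℕ} (c : ℕ) (w : Fin m → ℕ) (t : ℕ) :
    (letterCount (Fin.cons c w : Fin (m + 1) → ℕ) t : ℤ) =
      letterCount w t + (Pi.single c 1 : ℕ → ℤ) t := by
  simp only [letterCount, card_filter, Fin.sum_univ_succ, Fin.cons_zero, Fin.cons_succ,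
    Pi.single_apply, eq_comm (a := t)]
  push_cast
  ring

lemma sum_letterCount {m : ℕ} (w : Fin m → ℕ) (S : Finset ℕ) :
    ∑ t ∈ S, letterCount w t = #{i | w i ∈ S} := by
  simp only [letterCount, card_filter]
  rw [sum_comm]
  simp only [sum_ite_eq]

lemma wstat_cons {n m : ℕ} (c : ℕ) {w : Fin m → ℕ} (hw : ∀ i, w i ∈ Icc 1 n) :
    wstat n (m + 1) (Fin.cons c w) =
      ∑ t ∈ invertedLetters n c, letterCount w t + wstat n m w := by
  simp only [sum_letterCount, mem_invertedLetters (hw _), wstat, card_filter, sum_product,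
    Fin.sum_univ_succ, Fin.cons_zero, Fin.cons_succ, false_and, if_false,
    zero_add, Fin.succ_pos, true_and, Fin.not_lt_zero, Fin.succ_lt_succ_iff]

/-- The words of length `m` in the letters `1, …, n` with prescribed multiplicities `l`; these are
integers so that letters can be removed from `l` without case distinctions. -/
def wordsOfContent (n m : ℕ) (l : ℕ → ℤ) : Finset (Fin m → ℕ) :=
  {w ∈ Fintype.piFinset fun _ : Fin m => Icc 1 n |
    ∀ t ∈ (Icc 1 n : Finset ℕ), (letterCount w t : ℤ) = l t}

lemma mem_wordsOfContent {n m : ℕ} {l : ℕ → ℤ} {w : Fin m → ℕ} :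
    w ∈ wordsOfContent n m l ↔
      (∀ i, w i ∈ Icc 1 n) ∧ ∀ t ∈ Icc 1 n, (letterCount w t : ℤ) = l t := by
  rw [wordsOfContent, mem_filter, Fintype.mem_piFinset]

lemma cons_mem_wordsOfContent {n m c : ℕ} {l : ℕ → ℤ} {w : Fin m → ℕ} :
    Fin.cons c w ∈ wordsOfContent n (m + 1) l ↔
      c ∈ Icc 1 n ∧ w ∈ wordsOfContent n m (l - Pi.single c 1) := by
  rw [mem_wordsOfContent, mem_wordsOfContent, Fin.forall_fin_succ, and_assoc]
  simp only [Fin.cons_zero, Fin.cons_succ, letterCount_cons, Pi.sub_apply, eq_sub_iff_add_eq]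

lemma sum_wordsOfContent_zero (q : K) (n : ℕ) (l : ℕ → ℤ) :
    ∑ w ∈ wordsOfContent n 0 l, q ^ wstat n 0 w =
      if ∀ t ∈ (Icc 1 n : Finset ℕ), l t = 0 then 1 else 0 := by
  simp [wordsOfContent, letterCount, wstat, apply_ite, eq_comm]

lemma sum_wordsOfContent_succ (q : K) (n m : ℕ) (l : ℕ → ℤ) :
    ∑ w ∈ wordsOfContent n (m + 1) l, q ^ wstat n (m + 1) w =
      ∑ c ∈ Icc 1 n, q ^ (∑ t ∈ invertedLetters n c, l t) *
        ∑ w ∈ wordsOfContent n m (l - Pi.single c 1), q ^ wstat n m w := by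
  simp only [mul_sum]
  rw [sum_sigma']
  refine sum_nbij' (fun w => (⟨w 0, Fin.tail w⟩ : Σ _ : ℕ, (Fin m → ℕ)))
    (fun x => Fin.cons x.1 x.2) ?_ ?_ ?_ ?_ ?_
  · intro w hw
    rw [← Fin.cons_self_tail w, cons_mem_wordsOfContent] at hw
    exact mem_sigma.2 hw
  · intro x hx
    exact cons_mem_wordsOfContent.2 (mem_sigma.1 hx)
  · exact fun w _ => Fin.cons_self_tail w
  · exact fun x _ => by simp only [Fin.cons_zero, Fin.tail_cons]
  · intro w hw
    rw [← Fin.cons_self_tail w, cons_mem_wordsOfContent, mem_wordsOfContent] at hw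
    obtain ⟨hc, hletters, hcontent⟩ := hw
    have hexp : ∑ t ∈ invertedLetters n (w 0), l t =
        (∑ t ∈ invertedLetters n (w 0), letterCount (Fin.tail w) t : ℕ) := by
      push_cast
      refine sum_congr rfl fun t ht => ?_
      have hne : t ≠ w 0 := fun h => notMem_invertedLetters n (w 0) (h ▸ ht)
      rw [hcontent t (invertedLetters_subset_Icc hc ht), Pi.sub_apply, Pi.single_eq_of_ne hne,
        sub_zero]
    conv_lhs => rw [← Fin.cons_self_tail w, wstat_cons _ hletters, pow_add]
    rw [hexp, zpow_natCast]

lemma sum_wordsOfContent (hq : IsGeneric q) {n m : ℕ} {l : ℕ → ℤ} (hl : ∑ i ∈ Icc 1 n, l i = m) :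
    ∑ w ∈ wordsOfContent n m l, q ^ wstat n m w =
      qFact q m * ∏ i ∈ Icc 1 n, qFactInv q (l i) := by
  induction m generalizing l with
  | zero =>
    rw [sum_wordsOfContent_zero, prod_qFactInv_of_sum_eq_zero q (by simpa using hl),
      qFact_zero, one_mul]
  | succ m ih =>
    have hrest : ∀ c ∈ Icc 1 n, ∑ w ∈ wordsOfContent n m (l - Pi.single c 1), q ^ wstat n m w =
        qFact q m * (qInt q (l c) * ∏ i ∈ Icc 1 n, qFactInv q (l i)) := by
      intro c hc
      rw [ih, prod_qFactInv_sub_single hq hc]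
      simp only [Pi.sub_apply, sum_sub_distrib, hl, sum_pi_single', hc, if_true]
      push_cast
      ring
    rw [sum_wordsOfContent_succ, qFact_succ, show (m : ℤ) + 1 = ∑ i ∈ Icc 1 n, l i by rw [hl]; simp,
      ← sum_zpow_invertedLetters_mul_qInt hq.ne_zero, mul_sum, sum_mul]
    exact sum_congr rfl fun c hc => by rw [hrest c hc]; ring

end QMultinomials

/-! ### Admissible fillings -/

section Fillings

lemma mem_dgF {n : ℕ} {μ : ℕ → ℕ} {i j : ℕ} :
    (i, j) ∈ dgF n μ ↔ i ∈ Icc 1 n ∧ j ∈ Icc 1 (μ i) := by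
  simp only [dgF, mem_biUnion, mem_image, Prod.mk.injEq]
  aesop

/-- `CyclicLE o x y`: in the cyclic order of `ℕ` that starts at `o`, the letter `x` does not come
after `y`. -/
def CyclicLE (o x y : ℕ) : Prop := (o ≤ x ∧ (y < o ∨ x ≤ y)) ∨ (x < o ∧ y < o ∧ x ≤ y)

lemma CyclicLE.refl (o x : ℕ) : CyclicLE o x x := by
  unfold CyclicLE
  omega

/-- The fillings counted by `c_a^μ`, extended by zero off the diagram. The diagram need not be
antidominant, the greedy rule only looks at boxes to the left in the same row, and the content `κ`
is integral so that it can be decreased freely. -/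
structure IsAdmissible (n : ℕ) (μ a : ℕ → ℕ) (κ : ℕ → ℤ) (τ : ℕ × ℕ → ℕ) : Prop where
  eq_zero : ∀ u ∉ dgF n μ, τ u = 0
  mem_Icc : ∀ u ∈ dgF n μ, τ u ∈ Icc 1 n
  bottom : ∀ i, (i, 1) ∈ dgF n μ → τ (i, 1) = a i
  row_ne : ∀ i i' j, (i, j) ∈ dgF n μ → (i', j) ∈ dgF n μ → i ≠ i' → τ (i, j) ≠ τ (i', j)
  diagonal_ne : ∀ i i' j, (i, j + 1) ∈ dgF n μ → (i', j) ∈ dgF n μ → i < i' →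
    τ (i, j + 1) ≠ τ (i', j)
  greedy : ∀ i i' j, (i, j + 2) ∈ dgF n μ → (i', j + 2) ∈ dgF n μ → i' ≤ i →
    CyclicLE (τ (i, j + 1)) (τ (i, j + 2)) (τ (i', j + 2))
  content : ∀ t ∈ Icc 1 n, (#{u ∈ dgF n μ | τ u = t} : ℤ) = κ t

open Classical in
/-- The finite set of admissible fillings. -/
noncomputable def admissibleFillings (n : ℕ) (μ a : ℕ → ℕ) (κ : ℕ → ℤ) : Finset (ℕ × ℕ → ℕ) :=
  ((Fintype.piFinset fun _ : {u // u ∈ dgF n μ} => Icc 1 n).image (ext n μ)).filter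
    (IsAdmissible n μ a κ)

/-- The generating function of `asc` over the admissible fillings: `c_a^μ(κ)` evaluated at `q`. -/
noncomputable def fillingSum {K : Type*} [Field K] (q : K) (n : ℕ) (μ a : ℕ → ℕ) (κ : ℕ → ℤ) : K :=
  ∑ τ ∈ admissibleFillings n μ a κ, q ^ ascStat n μ τ

variable {n : ℕ} {μ a a' : ℕ → ℕ} {κ : ℕ → ℤ} {τ σ : ℕ × ℕ → ℕ}

lemma ext_restrict (h : ∀ u ∉ dgF n μ, τ u = 0) : ext n μ (fun u => τ u) = τ := by
  funext u
  by_cases hu : u ∈ dgF n μ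
  · simp only [ext, dif_pos hu]
  · simp only [ext, dif_neg hu, h u hu]

lemma mem_admissibleFillings : τ ∈ admissibleFillings n μ a κ ↔ IsAdmissible n μ a κ τ := by
  simp only [admissibleFillings, mem_filter, mem_image, Fintype.mem_piFinset,
    and_iff_right_iff_imp]
  exact fun h => ⟨fun u => τ u, fun u => h.mem_Icc _ u.2, ext_restrict h.eq_zero⟩

end Fillings

/-! ### Peeling off the bottom row -/

section Peeling

/-- The composition whose diagram is obtained by deleting the bottom row and moving down. -/
def dropRow (μ : ℕ → ℕ) : ℕ → ℕ := fun i => μ i - 1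

/-- The positions of the nonempty columns. -/
def columns (n : ℕ) (μ : ℕ → ℕ) : Finset ℕ := {i ∈ Icc 1 n | 1 ≤ μ i}

variable {n : ℕ} {μ a a' : ℕ → ℕ} {κ : ℕ → ℤ} {τ σ : ℕ × ℕ → ℕ} {i j : ℕ}

lemma mem_columns : i ∈ columns n μ ↔ (i, 1) ∈ dgF n μ := by
  simp only [columns, mem_filter, mem_dgF, mem_Icc, le_rfl, true_and]

lemma mem_dgF_dropRow : (i, j + 1) ∈ dgF n (dropRow μ) ↔ (i, j + 2) ∈ dgF n μ := by
  simp only [mem_dgF, dropRow, mem_Icc]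
  omega

lemma mem_columns_dropRow : i ∈ columns n (dropRow μ) ↔ (i, 2) ∈ dgF n μ := by
  rw [mem_columns, mem_dgF_dropRow]

lemma notMem_dgF_zero : (i, 0) ∉ dgF n μ := by
  simp only [mem_dgF, mem_Icc]
  omega

lemma mem_dgF_of_succ (h : (i, j + 2) ∈ dgF n μ) : (i, j + 1) ∈ dgF n μ := by
  simp only [mem_dgF, mem_Icc] at h ⊢
  omega

lemma columns_dropRow_subset : columns n (dropRow μ) ⊆ columns n μ := fun _ hi =>
  mem_columns.mpr (mem_dgF_of_succ (mem_columns_dropRow.mp hi))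

lemma sum_dgF {M : Type*} [AddCommMonoid M] (n : ℕ) (μ : ℕ → ℕ) (g : ℕ × ℕ → M) :
    ∑ u ∈ dgF n μ, g u = ∑ i ∈ Icc 1 n, ∑ j ∈ range (μ i), g (i, j + 1) := by
  rw [dgF, sum_biUnion fun i _ i' _ hne => disjoint_left.mpr fun u hu hu' => by
    simp only [mem_image] at hu hu'
    obtain ⟨⟨_, _, rfl⟩, _, _, h⟩ := hu, hu'
    exact hne (Prod.mk.inj h).1.symm]
  refine sum_congr rfl fun i _ => ?_
  rw [sum_image fun _ _ _ _ h => (Prod.mk.inj h).2, ← Ico_add_one_right_eq_Icc,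
    sum_Ico_eq_sum_range, Nat.add_sub_cancel]
  simp only [add_comm 1]

lemma sum_dgF_eq_bottom_add {M : Type*} [AddCommMonoid M] (n : ℕ) (μ : ℕ → ℕ) (g : ℕ × ℕ → M) :
    ∑ u ∈ dgF n μ, g u =
      ∑ i ∈ columns n μ, g (i, 1) + ∑ u ∈ dgF n (dropRow μ), g (u.1, u.2 + 1) := by
  rw [sum_dgF, sum_dgF, columns, sum_filter, ← sum_add_distrib]
  refine sum_congr rfl fun i _ => ?_
  rw [dropRow]
  cases μ i with
  | zero => simp
  | succ m => simp [sum_range_succ', add_comm]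

/-- Delete the bottom row of a filling and move it down. -/
def dropBottom (τ : ℕ × ℕ → ℕ) : ℕ × ℕ → ℕ
  | (_, 0) => 0
  | (i, j + 1) => τ (i, j + 2)

/-- Move a filling up and insert the bottom row `a`. -/
def addBottom (n : ℕ) (μ a : ℕ → ℕ) (σ : ℕ × ℕ → ℕ) : ℕ × ℕ → ℕ
  | (_, 0) => 0
  | (i, 1) => if i ∈ columns n μ then a i else 0
  | (i, j + 2) => σ (i, j + 1)

lemma dropBottom_addBottom (h : ∀ i, σ (i, 0) = 0) : dropBottom (addBottom n μ a σ) = σ := by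
  funext ⟨i, j⟩
  cases j with
  | zero => exact (h i).symm
  | succ j => rfl

lemma IsAdmissible.zero_row (h : IsAdmissible n μ a κ τ) (i : ℕ) : τ (i, 0) = 0 :=
  h.eq_zero _ notMem_dgF_zero

lemma IsAdmissible.addBottom_dropBottom (h : IsAdmissible n μ a κ τ) :
    addBottom n μ a (dropBottom τ) = τ := by
  funext ⟨i, j⟩
  obtain _ | _ | j := j
  · exact (h.zero_row i).symm
  · by_cases hi : i ∈ columns n μ
    · exact (if_pos hi).trans (h.bottom i (mem_columns.mp hi)).symm
    · exact (if_neg hi).trans (h.eq_zero _ (mt mem_columns.mpr hi)).symm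
  · rfl

lemma addBottom_one (hi : (i, 1) ∈ dgF n μ) : addBottom n μ a σ (i, 1) = a i :=
  if_pos (mem_columns.mpr hi)

/-- The conditions on a single row of a non-attacking filling. -/
structure IsRow (n : ℕ) (μ a : ℕ → ℕ) : Prop where
  mem_Icc : ∀ i ∈ columns n μ, a i ∈ Icc 1 n
  injOn : Set.InjOn a (columns n μ)

/-- The conditions relating the bottom row `a` to the second row `a'`. -/
structure IsNextRow (n : ℕ) (μ a a' : ℕ → ℕ) : Prop where
  diagonal_ne : ∀ i ∈ columns n (dropRow μ), ∀ i' ∈ columns n μ, i < i' → a' i ≠ a i'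
  greedy : ∀ i ∈ columns n (dropRow μ), ∀ i' ∈ columns n (dropRow μ), i' ≤ i →
    CyclicLE (a i) (a' i) (a' i')

/-- The number of occurrences of the letter `t` in the bottom row `a`. -/
def rowContent (n : ℕ) (μ a : ℕ → ℕ) (t : ℕ) : ℕ := #{i ∈ columns n μ | a i = t}

/-- The contribution to `asc` of the second row `a'` above the bottom row `a`. -/
def stepWeight (n : ℕ) (μ a a' : ℕ → ℕ) : ℕ :=
  ∑ i ∈ columns n (dropRow μ) with a' i < a i, dropRow μ i

lemma card_filter_eq_rowContent_add (hb : ∀ i, (i, 1) ∈ dgF n μ → τ (i, 1) = a i) (t : ℕ) :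
    #{u ∈ dgF n μ | τ u = t} =
      rowContent n μ a t + #{u ∈ dgF n (dropRow μ) | dropBottom τ u = t} := by
  rw [card_filter, sum_dgF_eq_bottom_add, rowContent, card_filter, card_filter]
  congr 1
  · exact sum_congr rfl fun i hi => by rw [hb i (mem_columns.mp hi)]
  · refine sum_congr rfl fun ⟨i, j⟩ hu => ?_
    obtain _ | j := j
    · exact absurd hu notMem_dgF_zero
    · rfl

lemma ascStat_eq_sum_dropRow (n : ℕ) (μ : ℕ → ℕ) (τ : ℕ × ℕ → ℕ) :
    ascStat n μ τ = ∑ u ∈ dgF n (dropRow μ),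
      if τ (u.1, u.2 + 1) < τ u then dropRow μ u.1 - u.2 + 1 else 0 := by
  rw [ascStat, sum_filter, sum_dgF_eq_bottom_add]
  have bottom_row : ∀ i ∈ columns n μ,
      (if 2 ≤ 1 ∧ τ (i, 1) < τ (dbox (i, 1)) then μ i - 1 + 1 else 0) = 0 := fun i _ =>
    if_neg fun h => absurd h.1 (by decide)
  rw [sum_eq_zero bottom_row, zero_add]
  refine sum_congr rfl fun ⟨i, j⟩ hu => ?_
  obtain _ | j := j
  · exact absurd hu notMem_dgF_zero
  · simp only [dbox, dropRow, Nat.add_sub_cancel, Nat.le_add_left, true_and, Nat.sub_sub,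
      Nat.add_comm 1]

lemma ascStat_eq_stepWeight_add (ha : ∀ i ∈ columns n (dropRow μ), τ (i, 1) = a i)
    (ha' : ∀ i ∈ columns n (dropRow μ), τ (i, 2) = a' i) :
    ascStat n μ τ = stepWeight n μ a a' + ascStat n (dropRow μ) (dropBottom τ) := by
  rw [ascStat_eq_sum_dropRow, ascStat_eq_sum_dropRow, sum_dgF_eq_bottom_add, stepWeight, sum_filter]
  congr 1
  · refine sum_congr rfl fun i hi => ?_
    rw [ha i hi, ha' i hi, Nat.sub_add_cancel (mem_filter.mp hi).2]
  · refine sum_congr rfl fun ⟨i, j⟩ hu => ?_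
    obtain _ | j := j
    · exact absurd hu notMem_dgF_zero
    · refine if_congr Iff.rfl ?_ rfl
      simp only [dropRow]
      omega

lemma IsAdmissible.isRow_second (h : IsAdmissible n μ a κ τ) :
    IsRow n (dropRow μ) fun i => τ (i, 2) where
  mem_Icc _ hi := h.mem_Icc _ (mem_columns_dropRow.mp hi)
  injOn i hi i' hi' he := by
    by_contra hne
    exact h.row_ne i i' 2 (mem_columns_dropRow.mp hi) (mem_columns_dropRow.mp hi') hne he

lemma IsAdmissible.isNextRow (h : IsAdmissible n μ a κ τ) :
    IsNextRow n μ a fun i => τ (i, 2) where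
  diagonal_ne i hi i' hi' hlt := by
    rw [← h.bottom i' (mem_columns.mp hi')]
    exact h.diagonal_ne i i' 1 (mem_columns_dropRow.mp hi) (mem_columns.mp hi') hlt
  greedy i hi i' hi' hle := by
    rw [← h.bottom i (mem_columns.mp (columns_dropRow_subset hi))]
    exact h.greedy i i' 0 (mem_columns_dropRow.mp hi) (mem_columns_dropRow.mp hi') hle

lemma IsAdmissible.dropBottom (h : IsAdmissible n μ a κ τ)
    (ha' : ∀ i ∈ columns n (dropRow μ), τ (i, 2) = a' i) :
    IsAdmissible n (dropRow μ) a' (fun t => κ t - rowContent n μ a t) (dropBottom τ) where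
  eq_zero := by
    rintro ⟨i, _ | j⟩ hu
    · rfl
    · exact h.eq_zero _ (mt mem_dgF_dropRow.mpr hu)
  mem_Icc := by
    rintro ⟨i, _ | j⟩ hu
    · exact absurd hu notMem_dgF_zero
    · exact h.mem_Icc _ (mem_dgF_dropRow.mp hu)
  bottom i hi := ha' i (mem_columns.mpr hi)
  row_ne := by
    rintro i i' (_ | j) hi hi'
    · exact absurd hi notMem_dgF_zero
    · exact h.row_ne i i' (j + 2) (mem_dgF_dropRow.mp hi) (mem_dgF_dropRow.mp hi')
  diagonal_ne := by
    rintro i i' (_ | j) hi hi'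
    · exact absurd hi' notMem_dgF_zero
    · exact h.diagonal_ne i i' (j + 2) (mem_dgF_dropRow.mp hi) (mem_dgF_dropRow.mp hi')
  greedy i i' j hi hi' :=
    h.greedy i i' (j + 1) (mem_dgF_dropRow.mp hi) (mem_dgF_dropRow.mp hi')
  content t ht := by
    rw [← h.content t ht, card_filter_eq_rowContent_add h.bottom t, Nat.cast_add,
      add_sub_cancel_left]

lemma IsAdmissible.addBottom (ha : IsRow n μ a) (haa' : IsNextRow n μ a a')
    (h : IsAdmissible n (dropRow μ) a' (fun t => κ t - rowContent n μ a t) σ) :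
    IsAdmissible n μ a κ (addBottom n μ a σ) where
  eq_zero := by
    rintro ⟨i, _ | _ | j⟩ hu
    · rfl
    · exact if_neg (mt mem_columns.mp hu)
    · exact h.eq_zero _ (mt mem_dgF_dropRow.mp hu)
  mem_Icc := by
    rintro ⟨i, _ | _ | j⟩ hu
    · exact absurd hu notMem_dgF_zero
    · exact (addBottom_one hu).symm ▸ ha.mem_Icc i (mem_columns.mpr hu)
    · exact h.mem_Icc _ (mem_dgF_dropRow.mpr hu)
  bottom i hi := addBottom_one hi
  row_ne := by
    rintro i i' (_ | _ | j) hi hi' hne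
    · exact absurd hi notMem_dgF_zero
    · rw [addBottom_one hi, addBottom_one hi']
      exact ha.injOn.ne (mem_columns.mpr hi) (mem_columns.mpr hi') hne
    · exact h.row_ne i i' (j + 1) (mem_dgF_dropRow.mpr hi) (mem_dgF_dropRow.mpr hi') hne
  diagonal_ne := by
    rintro i i' (_ | _ | j) hi hi' hlt
    · exact absurd hi' notMem_dgF_zero
    · have hi2 : (i, 1) ∈ dgF n (dropRow μ) := mem_dgF_dropRow.mpr hi
      rw [addBottom_one hi']
      exact (h.bottom i hi2).trans_ne
        (haa'.diagonal_ne i (mem_columns.mpr hi2) i' (mem_columns.mpr hi') hlt)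
    · exact h.diagonal_ne i i' (j + 1) (mem_dgF_dropRow.mpr hi) (mem_dgF_dropRow.mpr hi') hlt
  greedy := by
    rintro i i' (_ | j) hi hi' hle
    · have hi2 : (i, 1) ∈ dgF n (dropRow μ) := mem_dgF_dropRow.mpr hi
      have hi2' : (i', 1) ∈ dgF n (dropRow μ) := mem_dgF_dropRow.mpr hi'
      rw [addBottom_one (mem_dgF_of_succ hi)]
      change CyclicLE (a i) (σ (i, 1)) (σ (i', 1))
      rw [h.bottom i hi2, h.bottom i' hi2']
      exact haa'.greedy i (mem_columns.mpr hi2) i' (mem_columns.mpr hi2') hle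
    · exact h.greedy i i' j (mem_dgF_dropRow.mpr hi) (mem_dgF_dropRow.mpr hi') hle
  content t ht := by
    rw [card_filter_eq_rowContent_add (fun _ => addBottom_one) t, dropBottom_addBottom h.zero_row,
      Nat.cast_add, h.content t ht, add_sub_cancel]

/-- The family `R b`, `b ∈ B`, lists without repetition the rows that may follow the bottom row
`a`. -/
structure EnumeratesNextRows {ι : Type*} (n : ℕ) (μ a : ℕ → ℕ) (B : Finset ι) (R : ι → ℕ → ℕ) :
    Prop where
  isNextRow : ∀ b ∈ B, IsNextRow n μ a (R b)
  eq_of_eqOn : ∀ b ∈ B, ∀ b' ∈ B, Set.EqOn (R b) (R b') (columns n (dropRow μ)) → b = b'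
  exists_eqOn : ∀ a', IsRow n (dropRow μ) a' → IsNextRow n μ a a' →
    ∃ b ∈ B, Set.EqOn a' (R b) (columns n (dropRow μ))

lemma fillingSum_eq_sum_nextRows {K ι : Type*} [Field K] (q : K) (ha : IsRow n μ a)
    {B : Finset ι} {R : ι → ℕ → ℕ} (hR : EnumeratesNextRows n μ a B R) :
    fillingSum q n μ a κ = ∑ b ∈ B, q ^ stepWeight n μ a (R b) *
      fillingSum q n (dropRow μ) (R b) (fun t => κ t - rowContent n μ a t) := by
  simp only [fillingSum, mul_sum]
  rw [sum_sigma']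
  symm
  refine sum_bij (fun x _ => addBottom n μ a x.2) ?_ ?_ ?_ ?_
  · rintro ⟨b, σ⟩ hx
    rw [mem_sigma, mem_admissibleFillings] at hx
    exact mem_admissibleFillings.mpr (.addBottom ha (hR.isNextRow b hx.1) hx.2)
  · rintro ⟨b, σ⟩ hx ⟨b', σ'⟩ hx' he
    rw [mem_sigma, mem_admissibleFillings] at hx hx'
    obtain rfl : σ = σ' := calc
      σ = dropBottom (addBottom n μ a σ) := (dropBottom_addBottom hx.2.zero_row).symm
      _ = dropBottom (addBottom n μ a σ') := congrArg dropBottom he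
      _ = σ' := dropBottom_addBottom hx'.2.zero_row
    obtain rfl : b = b' := hR.eq_of_eqOn b hx.1 b' hx'.1 fun i hi => by
      rw [← hx.2.bottom i (mem_columns.mp hi), ← hx'.2.bottom i (mem_columns.mp hi)]
    rfl
  · intro τ hτ
    rw [mem_admissibleFillings] at hτ
    obtain ⟨b, hb, hτb⟩ := hR.exists_eqOn _ hτ.isRow_second hτ.isNextRow
    exact ⟨⟨b, dropBottom τ⟩, mem_sigma.mpr ⟨hb, mem_admissibleFillings.mpr (hτ.dropBottom hτb)⟩,
      hτ.addBottom_dropBottom⟩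
  · rintro ⟨b, σ⟩ hx
    rw [mem_sigma, mem_admissibleFillings] at hx
    rw [← pow_add, ascStat_eq_stepWeight_add (a := a) (a' := R b)
      (fun i hi => if_pos (columns_dropRow_subset hi))
      (fun i hi => hx.2.bottom i (mem_columns.mp hi)), dropBottom_addBottom hx.2.zero_row]

end Peeling

/-! ### The rows containing only the box of column `n` -/

section Tail

variable {K : Type*} [Field K] {q : K} {n h : ℕ} {μ a : ℕ → ℕ} {κ d : ℕ → ℤ}

lemma fillingSum_of_eq_zero (q : K) (hμ : ∀ i ∈ Icc 1 n, μ i = 0) :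
    fillingSum q n μ a κ = if ∀ t ∈ (Icc 1 n : Finset ℕ), κ t = 0 then 1 else 0 := by
  have dgF_eq_empty : dgF n μ = ∅ := by
    refine eq_empty_of_forall_notMem fun ⟨i, j⟩ hu => ?_
    obtain ⟨hi, hj⟩ := mem_dgF.mp hu
    rw [hμ i hi] at hj
    exact notMem_empty j hj
  have isAdmissible_iff (τ) : IsAdmissible n μ a κ τ ↔ τ = 0 ∧ ∀ t ∈ Icc 1 n, κ t = 0 := by
    constructor
    · refine fun hτ => ⟨funext fun u => hτ.eq_zero u (by simp [dgF_eq_empty]), fun t ht => ?_⟩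
      simp [← hτ.content t ht, dgF_eq_empty]
    · rintro ⟨rfl, hκ⟩
      constructor <;> simp_all
  split_ifs with hκ
  · have : admissibleFillings n μ a κ = {0} := by
      ext τ
      rw [mem_admissibleFillings, isAdmissible_iff, mem_singleton, and_iff_left hκ]
    rw [fillingSum, this, sum_singleton, ascStat, dgF_eq_empty, filter_empty, sum_empty, pow_zero]
  · rw [fillingSum, sum_eq_zero fun τ hτ => ?_]
    exact absurd ((isAdmissible_iff τ).mp (mem_admissibleFillings.mp hτ)).2 hκ

lemma columns_eq_empty (hμ : ∀ i ∈ Icc 1 n, μ i = 0) : columns n μ = ∅ :=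
  filter_eq_empty_iff.mpr fun i hi => by simp [hμ i hi]

lemma columns_eq_singleton (hn : 1 ≤ n)
    (hμ : ∀ i ∈ Icc 1 n, μ i = (Pi.single n (h + 1) : ℕ → ℕ) i) : columns n μ = {n} := by
  ext i
  rw [columns, mem_filter, mem_singleton]
  constructor
  · rintro ⟨hi, hpos⟩
    by_contra hne
    rw [hμ i hi, Pi.single_eq_of_ne hne] at hpos
    exact absurd hpos (by decide)
  · rintro rfl
    have hi : i ∈ Icc 1 i := right_mem_Icc.mpr hn
    exact ⟨hi, by simp [hμ i hi]⟩

lemma enumeratesNextRows_of_columns_eq_empty (hcol : columns n (dropRow μ) = ∅) :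
    EnumeratesNextRows n μ a ({()} : Finset Unit) fun _ => a where
  isNextRow _ _ := ⟨by simp [hcol], by simp [hcol]⟩
  eq_of_eqOn _ _ _ _ _ := rfl
  exists_eqOn _ _ _ := ⟨(), by simp [hcol]⟩

lemma enumeratesNextRows_of_columns_eq_singleton (hcol : columns n (dropRow μ) = {n}) :
    EnumeratesNextRows n μ a (Icc 1 n) fun b _ => b where
  isNextRow b _ := by
    refine ⟨fun i hi i' hi' hlt => ?_, fun _ _ _ _ _ => .refl _ _⟩
    rw [hcol, mem_singleton] at hi
    have hi'n : i' ≤ n := (mem_Icc.mp (mem_filter.mp hi').1).2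
    omega
  eq_of_eqOn b _ b' _ heq := heq (show n ∈ (columns n (dropRow μ) : Set ℕ) by simp [hcol])
  exists_eqOn a' ha' _ := by
    refine ⟨a' n, ha'.mem_Icc n (by simp [hcol]), fun i hi => ?_⟩
    rw [hcol, coe_singleton, Set.mem_singleton_iff] at hi
    exact congrArg a' hi

lemma rowContent_const (hcol : columns n μ = {n}) (b t : ℕ) :
    rowContent n μ (fun _ => b) t = (Pi.single b 1 : ℕ → ℕ) t := by
  rw [rowContent, hcol, filter_singleton, Pi.single_apply]
  by_cases ht : t = b
  · simp [ht]
  · simp [ht, Ne.symm ht]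

lemma pow_stepWeight_const (hcol : columns n (dropRow μ) = {n}) (b : ℕ) :
    q ^ stepWeight n μ a (fun _ => b) =
      q ^ (if b < a n then (dropRow μ n : ℤ) else 0) := by
  rw [stepWeight, hcol, sum_filter, sum_singleton, ← zpow_natCast]
  split_ifs <;> rfl

lemma isRow_const (hcol : columns n μ = {n}) {b : ℕ} (hb : b ∈ Icc 1 n) :
    IsRow n μ fun _ => b where
  mem_Icc _ _ := hb
  injOn := by simp [hcol]

lemma dropRow_eq_single (hμ : ∀ i ∈ Icc 1 n, μ i = (Pi.single n (h + 1) : ℕ → ℕ) i) :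
    ∀ i ∈ Icc 1 n, dropRow μ i = (Pi.single n h : ℕ → ℕ) i := fun i hi => by
  rw [dropRow, hμ i hi, Pi.single_apply, Pi.single_apply]
  split_ifs <;> rfl

lemma content_const (hcol : columns n (dropRow μ) = {n})
    (hκ : ∀ t ∈ Icc 1 n, κ t = d t + rowContent n μ a t) (b : ℕ) :
    ∀ t ∈ Icc 1 n, κ t - rowContent n μ a t =
      (d - Pi.single b 1 : ℕ → ℤ) t + rowContent n (dropRow μ) (fun _ => b) t := fun t ht => by
  rw [hκ t ht, rowContent_const hcol, Pi.sub_apply, Pi.single_apply, Pi.single_apply]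
  push_cast
  ring

lemma sum_Icc_sub_single {b : ℕ} (hb : b ∈ Icc 1 n) (hd : ∑ t ∈ Icc 1 n, d t = (h + 1 : ℕ)) :
    ∑ t ∈ Icc 1 n, (d - Pi.single b 1 : ℕ → ℤ) t = h := by
  simp only [Pi.sub_apply]
  rw [sum_sub_distrib, hd, sum_pi_single', if_pos hb]
  push_cast
  ring

lemma sum_Ico_sub_single (d : ℕ → ℤ) (b : ℕ) :
    ∑ t ∈ Ico 1 b, (d - Pi.single b 1 : ℕ → ℤ) t = ∑ t ∈ Ico 1 b, d t :=
  sum_congr rfl fun t ht => by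
    rw [Pi.sub_apply, Pi.single_eq_of_ne (mem_Ico.mp ht).2.ne, sub_zero]

lemma fillingSum_tail_zero (q : K) (ha : IsRow n μ a) (han : a n ≤ n + 1)
    (hμ : ∀ i ∈ Icc 1 n, dropRow μ i = 0) (hκ : ∀ t ∈ Icc 1 n, κ t = d t + rowContent n μ a t)
    (hd : ∑ t ∈ Icc 1 n, d t = 0) :
    fillingSum q n μ a κ = q ^ (∑ t ∈ Ico 1 (a n), d t) * ∏ t ∈ Icc 1 n, qFactInv q (d t) := by
  have hcol := columns_eq_empty hμ
  have content_iff : (∀ t ∈ Icc 1 n, κ t - rowContent n μ a t = 0) ↔ ∀ t ∈ Icc 1 n, d t = 0 :=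
    forall₂_congr fun t ht => by rw [hκ t ht, add_sub_cancel_right]
  rw [fillingSum_eq_sum_nextRows q ha (enumeratesNextRows_of_columns_eq_empty hcol), sum_singleton,
    fillingSum_of_eq_zero q hμ, stepWeight, hcol, filter_empty, sum_empty, pow_zero, one_mul,
    prod_qFactInv_of_sum_eq_zero q hd]
  simp only [content_iff]
  split_ifs with hd0
  · have : ∑ t ∈ Ico 1 (a n), d t = 0 :=
      sum_eq_zero fun t ht => hd0 t (mem_Icc.mpr (by rw [mem_Ico] at ht; omega))
    rw [this, zpow_zero, one_mul]
  · rw [mul_zero]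

lemma fillingSum_tail (hq : IsGeneric q) (hn : 1 ≤ n) (ha : IsRow n μ a) (hμn : 1 ≤ μ n)
    (hμ : ∀ i ∈ Icc 1 n, dropRow μ i = (Pi.single n h : ℕ → ℕ) i)
    (hκ : ∀ t ∈ Icc 1 n, κ t = d t + rowContent n μ a t) (hd : ∑ t ∈ Icc 1 n, d t = h) :
    fillingSum q n μ a κ =
      q ^ (∑ t ∈ Ico 1 (a n), d t) * (qFact q h * ∏ t ∈ Icc 1 n, qFactInv q (d t)) := by
  have hnn : n ∈ Icc 1 n := right_mem_Icc.mpr hn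
  have han : a n ∈ Icc 1 n := ha.mem_Icc n (mem_filter.mpr ⟨hnn, hμn⟩)
  induction h generalizing μ a κ d with
  | zero =>
    rw [qFact_zero, one_mul]
    refine fillingSum_tail_zero q ha ((mem_Icc.mp han).2.trans n.le_succ) (fun i hi => ?_) hκ hd
    rw [hμ i hi, Pi.single_zero, Pi.zero_apply]
  | succ h ih =>
    have hcol : columns n (dropRow μ) = {n} := columns_eq_singleton hn hμ
    have hμn' : dropRow μ n = h + 1 := by rw [hμ n hnn, Pi.single_eq_same]
    have step (b) (hb : b ∈ Icc 1 n) :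
        q ^ stepWeight n μ a (fun _ => b) *
            fillingSum q n (dropRow μ) (fun _ => b) (fun t => κ t - rowContent n μ a t) =
          q ^ ((if b < a n then ∑ t ∈ Icc 1 n, d t else 0) + ∑ t ∈ Ico 1 b, d t) * qInt q (d b) *
            (qFact q h * ∏ t ∈ Icc 1 n, qFactInv q (d t)) := by
      rw [ih (d := d - Pi.single b 1) (isRow_const hcol hb) (by omega)
        (dropRow_eq_single hμ) (content_const hcol hκ b) (sum_Icc_sub_single hb hd) hb,
        sum_Ico_sub_single, prod_qFactInv_sub_single hq hb, pow_stepWeight_const hcol, hμn', hd,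
        zpow_add₀ hq.ne_zero]
      ring
    rw [fillingSum_eq_sum_nextRows q ha (enumeratesNextRows_of_columns_eq_singleton hcol),
      sum_congr rfl step, ← sum_mul, sum_cyclic_prefix_zpow_mul_qInt hq.ne_zero d han, hd,
      qFact_succ]
    push_cast
    ring

end Tail

/-! ### Greedy rows -/

section GreedyRows

lemma CyclicLE.antisymm {o x y : ℕ} (hxy : CyclicLE o x y) (hyx : CyclicLE o y x) : x = y := by
  unfold CyclicLE at hxy hyx
  omega

lemma CyclicLE.eq_start {o x : ℕ} (h : CyclicLE o x o) : x = o := by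
  unfold CyclicLE at h
  omega

lemma exists_cyclicLE (o : ℕ) {W : Finset ℕ} (hW : W.Nonempty) :
    ∃ x ∈ W, ∀ y ∈ W, CyclicLE o x y := by
  by_cases hge : {y ∈ W | o ≤ y}.Nonempty
  · obtain ⟨x, hx, hmin⟩ := exists_min_image _ id hge
    rw [mem_filter] at hx
    refine ⟨x, hx.1, fun y hy => Or.inl ⟨hx.2, ?_⟩⟩
    exact (lt_or_ge y o).imp_right fun hoy => hmin y (mem_filter.mpr ⟨hy, hoy⟩)
  · have hlt : ∀ y ∈ W, y < o := fun y hy => by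
      by_contra! hoy
      exact hge ⟨y, mem_filter.mpr ⟨hy, hoy⟩⟩
    obtain ⟨x, hx, hmin⟩ := exists_min_image W id hW
    exact ⟨x, hx, fun y hy => Or.inr ⟨hlt x hx, hlt y hy, hmin y hy⟩⟩

variable {ι : Type*} [LinearOrder ι] {o w w' : ι → ℕ} {S : Finset ι} {m : ι} {a b : ℕ}

/-- A row `w` on the columns `S` that obeys the greedy rule above the row `o`: each entry is the
first, in the cyclic order starting at the entry below it, among itself and the entries to its
left. -/
structure IsGreedyRow (o : ι → ℕ) (S : Finset ι) (w : ι → ℕ) : Prop where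
  injOn : Set.InjOn w S
  greedy : ∀ i ∈ S, ∀ i' ∈ S, i' ≤ i → CyclicLE (o i) (w i) (w i')

lemma IsGreedyRow.congr (h : IsGreedyRow o S w) (hw : Set.EqOn w w' S) : IsGreedyRow o S w' where
  injOn := h.injOn.congr hw
  greedy i hi i' hi' hle := hw hi ▸ hw hi' ▸ h.greedy i hi i' hi' hle

lemma isGreedyRow_insert_max (hm : ∀ i ∈ S, i < m) :
    IsGreedyRow o (insert m S) w ↔
      IsGreedyRow o S w ∧ w m ∉ S.image w ∧ ∀ y ∈ S.image w, CyclicLE (o m) (w m) y := by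
  have hmS : m ∉ S := fun hmem => (hm m hmem).false
  constructor
  · intro h
    refine ⟨⟨h.injOn.mono (coe_subset.mpr (subset_insert m S)), fun i hi i' hi' =>
      h.greedy i (mem_insert_of_mem hi) i' (mem_insert_of_mem hi')⟩, ?_, ?_⟩
    · have hinj := h.injOn
      rw [coe_insert, Set.injOn_insert (mem_coe.not.mpr hmS), ← coe_image] at hinj
      exact hinj.2
    · refine forall_mem_image.mpr fun i hi => ?_
      exact h.greedy m (mem_insert_self m S) i (mem_insert_of_mem hi) (hm i hi).le
  · rintro ⟨hS, hnotMem, hmin⟩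
    refine ⟨?_, fun i hi i' hi' hle => ?_⟩
    · rw [coe_insert, Set.injOn_insert (mem_coe.not.mpr hmS), ← coe_image]
      exact ⟨hS.injOn, hnotMem⟩
    · obtain rfl | hiS := mem_insert.mp hi
      · obtain rfl | hi'S := mem_insert.mp hi'
        · exact .refl _ _
        · exact hmin _ (mem_image_of_mem w hi'S)
      · obtain rfl | hi'S := mem_insert.mp hi'
        · exact absurd hle (hm i hiS).not_ge
        · exact hS.greedy i hiS i' hi'S hle

lemma exists_isGreedyRow (o : ι → ℕ) (S : Finset ι) (W : Finset ℕ) (hW : #W = #S) :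
    ∃ w, IsGreedyRow o S w ∧ S.image w = W := by
  induction S using Finset.induction_on_max generalizing W with
  | empty =>
    rw [card_empty, card_eq_zero] at hW
    exact ⟨fun _ => 0, ⟨by simp, by simp⟩, by rw [hW, image_empty]⟩
  | insert m S hm ih =>
    have hmS : m ∉ S := fun hmem => (hm m hmem).false
    rw [card_insert_of_notMem hmS] at hW
    obtain ⟨x, hx, hmin⟩ := exists_cyclicLE (o m) (card_pos.mp (by omega : 0 < #W))
    obtain ⟨w, hw, hwx⟩ := ih (W.erase x) (by rw [card_erase_of_mem hx]; omega)
    have heq : Set.EqOn w (Function.update w m x) S := fun i hi =>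
      (Function.update_of_ne (hm i hi).ne x w).symm
    have himage : S.image (Function.update w m x) = W.erase x := (image_congr heq).symm.trans hwx
    refine ⟨Function.update w m x, (isGreedyRow_insert_max hm).mpr ⟨hw.congr heq, ?_, ?_⟩, ?_⟩
    · rw [himage, Function.update_self]
      exact notMem_erase x W
    · rw [himage, Function.update_self]
      exact fun y hy => hmin y (mem_of_mem_erase hy)
    · rw [image_insert, himage, Function.update_self, insert_erase hx]

lemma IsGreedyRow.cyclicLE_max (hm : ∀ i ∈ S, i < m) (h : IsGreedyRow o (insert m S) w) {y : ℕ}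
    (hy : y ∈ (insert m S).image w) : CyclicLE (o m) (w m) y := by
  rw [image_insert, mem_insert] at hy
  obtain rfl | hy := hy
  · exact .refl _ _
  · exact ((isGreedyRow_insert_max hm).mp h).2.2 y hy

lemma IsGreedyRow.eqOn_of_image_eq (hw : IsGreedyRow o S w) (hw' : IsGreedyRow o S w')
    (h : S.image w = S.image w') : Set.EqOn w w' S := by
  induction S using Finset.induction_on_max with
  | empty => simp
  | insert m S hm ih =>
    obtain ⟨hwS, hwm, -⟩ := (isGreedyRow_insert_max hm).mp hw
    obtain ⟨hwS', hwm', -⟩ := (isGreedyRow_insert_max hm).mp hw'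
    have hmax : w m = w' m :=
      (hw.cyclicLE_max hm (h ▸ mem_image_of_mem w' (mem_insert_self m S))).antisymm
        (hw'.cyclicLE_max hm (h ▸ mem_image_of_mem w (mem_insert_self m S)))
    have himage : S.image w = S.image w' := by
      rw [← erase_insert hwm, ← erase_insert hwm', ← image_insert, ← image_insert, h, hmax]
    intro i hi
    obtain rfl | hiS := mem_insert.mp hi
    · exact hmax
    · exact ih hwS hwS' himage hiS

/- Removing the last column either leaves the missing letters `a` of `o` and `b` of `w` unchanged,
or the last entry of `w` takes over the role of `b`. -/
lemma IsGreedyRow.missing_of_insert_max (hm : ∀ i ∈ S, i < m) (hw : IsGreedyRow o (insert m S) w)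
    (ho : o m ∉ S.image o) (h : insert b ((insert m S).image w) = insert a ((insert m S).image o))
    (hb : b ∉ (insert m S).image w) (ha : a ∉ (insert m S).image o) :
    (w m = o m ∧ insert b (S.image w) = insert a (S.image o)) ∨
      (o m = b ∧ CyclicLE b (w m) a ∧ insert (w m) (S.image w) = insert a (S.image o)) := by
  obtain ⟨-, hwm, -⟩ := (isGreedyRow_insert_max hm).mp hw
  have hao : a ≠ o m := fun hne => ha (hne ▸ mem_image_of_mem o (mem_insert_self m S))
  by_cases hom : o m ∈ (insert m S).image w
  · have hwo : w m = o m := (hw.cyclicLE_max hm hom).eq_start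
    have hbo : b ≠ o m := fun hne => hb (hne ▸ hom)
    refine Or.inl ⟨hwo, ?_⟩
    rw [image_insert, image_insert] at h
    rw [← erase_insert hwm, ← erase_insert ho, hwo, ← erase_insert_of_ne hbo,
      ← erase_insert_of_ne hao, ← hwo, h, hwo]
  · have hob : o m = b := by
      have hmem : o m ∈ insert b ((insert m S).image w) := by
        rw [h, image_insert]
        exact mem_insert_of_mem (mem_insert_self _ _)
      exact (mem_insert.mp hmem).resolve_right hom
    have hS : (insert m S).image w = insert a (S.image o) := by
      rw [← erase_insert hb, h, image_insert, Finset.insert_comm, ← hob,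
        erase_insert (by simp only [mem_insert, not_or]; exact ⟨hao.symm, ho⟩)]
    refine Or.inr ⟨hob, ?_, by rw [← image_insert, hS]⟩
    exact hob ▸ hw.cyclicLE_max hm (hS ▸ mem_insert_self a _)

lemma IsGreedyRow.card_filter_lt (hw : IsGreedyRow o S w) (ho : Set.InjOn o S)
    (h : insert b (S.image w) = insert a (S.image o)) (hb : b ∉ S.image w) (ha : a ∉ S.image o) :
    #{i ∈ S | w i < o i} = if a < b then 1 else 0 := by
  induction S using Finset.induction_on_max generalizing b with
  | empty =>
    rw [image_empty, image_empty, insert_empty, insert_empty, singleton_inj] at h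
    simp [h]
  | insert m S hm ih =>
    have hmS : m ∉ S := fun hmem => (hm m hmem).false
    obtain ⟨hwS, hwm, -⟩ := (isGreedyRow_insert_max hm).mp hw
    rw [coe_insert, Set.injOn_insert (mem_coe.not.mpr hmS), ← coe_image] at ho
    have haS : a ∉ S.image o := fun hmem => ha (image_subset_image (subset_insert m S) hmem)
    have card_insert : #{i ∈ insert m S | w i < o i} =
        (if w m < o m then 1 else 0) + #{i ∈ S | w i < o i} := by
      rw [card_filter, card_filter, sum_insert hmS]
    rw [card_insert]
    obtain ⟨hwo, hS⟩ | ⟨hob, hle, hS⟩ := hw.missing_of_insert_max hm ho.2 h hb ha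
    · have hbS : b ∉ S.image w := fun hmem => hb (image_subset_image (subset_insert m S) hmem)
      rw [ih hwS ho.1 hS hbS haS, hwo, if_neg (lt_irrefl _), zero_add]
    · have hwb : w m ≠ b := fun hne => hb (hne ▸ mem_image_of_mem w (mem_insert_self m S))
      rw [ih hwS ho.1 hS hwm haS, hob]
      unfold CyclicLE at hle
      split_ifs <;> omega

lemma IsGreedyRow.diagonal_ne (hw : IsGreedyRow o S w) (ho : Set.InjOn o S)
    (h : insert b (S.image w) = insert a (S.image o)) (hb : b ∉ S.image w) (ha : a ∉ S.image o) :
    ∀ i ∈ S, ∀ i' ∈ S, i < i' → w i ≠ o i' := by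
  induction S using Finset.induction_on_max generalizing b with
  | empty => simp
  | insert m S hm ih =>
    have hmS : m ∉ S := fun hmem => (hm m hmem).false
    obtain ⟨hwS, hwm, -⟩ := (isGreedyRow_insert_max hm).mp hw
    rw [coe_insert, Set.injOn_insert (mem_coe.not.mpr hmS), ← coe_image] at ho
    have haS : a ∉ S.image o := fun hmem => ha (image_subset_image (subset_insert m S) hmem)
    have hbS : b ∉ S.image w := fun hmem => hb (image_subset_image (subset_insert m S) hmem)
    have hcases := hw.missing_of_insert_max hm ho.2 h hb ha
    have homS : o m ∉ S.image w := by
      obtain ⟨hwo, -⟩ | ⟨hob, -⟩ := hcases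
      · exact hwo ▸ hwm
      · exact hob ▸ hbS
    have hne : ∀ i ∈ S, ∀ i' ∈ S, i < i' → w i ≠ o i' := by
      obtain ⟨-, hS⟩ | ⟨-, -, hS⟩ := hcases
      · exact ih hwS ho.1 hS hbS haS
      · exact ih hwS ho.1 hS hwm haS
    intro i hi i' hi' hlt
    have hiS : i ∈ S := by
      refine (mem_insert.mp hi).resolve_left ?_
      rintro rfl
      obtain rfl | hi'S := mem_insert.mp hi'
      · exact hlt.false
      · exact (hm i' hi'S).not_gt hlt
    obtain rfl | hi'S := mem_insert.mp hi'
    · exact fun heq => homS (heq ▸ mem_image_of_mem w hiS)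
    · exact hne i hiS i' hi'S hlt

end GreedyRows

/-! ### Rows missing one letter -/

section FullRows

/-- A row on the columns `2, …, n` in which every letter of `{1, …, n}` except `z` occurs exactly
once. -/
structure IsRowMissing (n : ℕ) (a : ℕ → ℕ) (z : ℕ) : Prop where
  mem_Icc : z ∈ Icc 1 n
  injOn : Set.InjOn a (Icc 2 n)
  image_eq : (Icc 2 n).image a = (Icc 1 n).erase z

variable {n z b : ℕ} {μ a a' w w' : ℕ → ℕ}

lemma IsRowMissing.apply_mem (ha : IsRowMissing n a z) {i : ℕ} (hi : i ∈ Icc 2 n) :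
    a i ∈ (Icc 1 n).erase z :=
  ha.image_eq ▸ mem_image_of_mem a hi

lemma IsRowMissing.isRow (ha : IsRowMissing n a z) (hcol : columns n μ = Icc 2 n) :
    IsRow n μ a where
  mem_Icc _ hi := mem_of_mem_erase (ha.apply_mem (hcol ▸ hi))
  injOn := hcol ▸ ha.injOn

lemma IsRow.exists_isRowMissing (hn : 1 ≤ n) (ha : IsRow n μ a) (hcol : columns n μ = Icc 2 n) :
    ∃ z, IsRowMissing n a z := by
  obtain ⟨hmem, hinj⟩ := ha
  rw [hcol] at hmem hinj
  have hsub : (Icc 2 n).image a ⊆ Icc 1 n := image_subset_iff.mpr hmem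
  have hcard : #((Icc 2 n).image a) + 1 = #(Icc 1 n) := by
    rw [card_image_of_injOn hinj, Nat.card_Icc, Nat.card_Icc]
    omega
  obtain ⟨z, hz, hinsert⟩ := exists_eq_insert_iff.mpr ⟨hsub, hcard⟩
  exact ⟨z, hinsert ▸ mem_insert_self z _, hinj, by rw [← hinsert, erase_insert hz]⟩

lemma IsRowMissing.rowContent (ha : IsRowMissing n a z) (hcol : columns n μ = Icc 2 n) {t : ℕ}
    (ht : t ∈ Icc 1 n) : rowContent n μ a t = if t = z then 0 else 1 := by
  rw [CO.rowContent, hcol]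
  split_ifs with htz
  · rw [card_eq_zero, filter_eq_empty_iff]
    exact fun i hi => htz ▸ ne_of_mem_erase (ha.apply_mem hi)
  · obtain ⟨i, hi, rfl⟩ := mem_image.mp (ha.image_eq ▸ mem_erase.mpr ⟨htz, ht⟩)
    rw [card_eq_one]
    refine ⟨i, Finset.ext fun i' => ?_⟩
    rw [mem_filter, mem_singleton]
    exact ⟨fun h => ha.injOn h.1 hi h.2, by rintro rfl; exact ⟨hi, rfl⟩⟩

lemma IsRowMissing.insert_image_eq (ha : IsRowMissing n a z) :
    insert z ((Icc 2 n).image a) = Icc 1 n := by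
  rw [ha.image_eq, insert_erase ha.mem_Icc]

lemma IsRowMissing.notMem_image (ha : IsRowMissing n a z) : z ∉ (Icc 2 n).image a := by
  rw [ha.image_eq]
  exact notMem_erase z _

lemma exists_isGreedyRow_isRowMissing (a : ℕ → ℕ) (hb : b ∈ Icc 1 n) :
    ∃ w, IsGreedyRow a (Icc 2 n) w ∧ IsRowMissing n w b := by
  obtain ⟨w, hw, himage⟩ := exists_isGreedyRow a (Icc 2 n) ((Icc 1 n).erase b) (by
    rw [card_erase_of_mem hb, Nat.card_Icc, Nat.card_Icc]
    omega)
  exact ⟨w, hw, hb, hw.injOn, himage⟩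

lemma IsRowMissing.isNextRow (ha : IsRowMissing n a z) (hwb : IsRowMissing n w b)
    (hw : IsGreedyRow a (Icc 2 n) w) (hcol : columns n μ = Icc 2 n)
    (hcol' : columns n (dropRow μ) = Icc 2 n) : IsNextRow n μ a w where
  diagonal_ne := by
    rw [hcol, hcol']
    exact hw.diagonal_ne ha.injOn (hwb.insert_image_eq.trans ha.insert_image_eq.symm)
      hwb.notMem_image ha.notMem_image
  greedy := by
    rw [hcol']
    exact hw.greedy

lemma IsRowMissing.card_filter_lt (ha : IsRowMissing n a z) (hwb : IsRowMissing n w b)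
    (hw : IsGreedyRow a (Icc 2 n) w) : #{i ∈ Icc 2 n | w i < a i} = if z < b then 1 else 0 :=
  hw.card_filter_lt ha.injOn (hwb.insert_image_eq.trans ha.insert_image_eq.symm) hwb.notMem_image
    ha.notMem_image

lemma IsRowMissing.enumeratesNextRows (ha : IsRowMissing n a z) (hn : 1 ≤ n) {R : ℕ → ℕ → ℕ}
    (hR : ∀ b ∈ Icc 1 n, IsGreedyRow a (Icc 2 n) (R b) ∧ IsRowMissing n (R b) b)
    (hcol : columns n μ = Icc 2 n) (hcol' : columns n (dropRow μ) = Icc 2 n) :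
    EnumeratesNextRows n μ a (Icc 1 n) R where
  isNextRow b hb := ha.isNextRow (hR b hb).2 (hR b hb).1 hcol hcol'
  eq_of_eqOn b hb b' hb' heq := by
    have himage : (Icc 2 n).image (R b) = (Icc 2 n).image (R b') := image_congr (hcol' ▸ heq)
    by_contra hne
    refine (hR b hb).2.notMem_image (himage ▸ ?_)
    rw [(hR b' hb').2.image_eq]
    exact mem_erase.mpr ⟨hne, hb⟩
  exists_eqOn a' ha' hnext := by
    obtain ⟨b, hab⟩ := ha'.exists_isRowMissing hn hcol'
    have hgreedy : IsGreedyRow a (Icc 2 n) a' := ⟨hcol' ▸ ha'.injOn, hcol' ▸ hnext.greedy⟩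
    have hRb := hR b hab.mem_Icc
    refine ⟨b, hab.mem_Icc, hcol' ▸ hgreedy.eqOn_of_image_eq hRb.1 ?_⟩
    rw [hab.image_eq, hRb.2.image_eq]

lemma eq_advance {v x : ℕ} (hn : 2 ≤ n) (hv : v ∈ Icc 1 n) (hx : x ∈ (Icc 1 n).erase b)
    (hmin : ∀ y ∈ (Icc 1 n).erase b, CyclicLE v x y) : x = advance n v b := by
  simp only [mem_erase, mem_Icc] at hv hx hmin
  unfold CyclicLE at hmin
  unfold advance
  split_ifs with hbv hvn
  · have := hmin 1
    omega
  · have := hmin (v + 1)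
    omega
  · have := hmin v
    omega

lemma advance_lt_iff {v : ℕ} (hn : 2 ≤ n) : advance n v b < v ↔ b = v ∧ v = n := by
  unfold advance
  split_ifs <;> omega

lemma IsRowMissing.last_eq_advance (ha : IsRowMissing n a z) (hwb : IsRowMissing n w b)
    (hw : IsGreedyRow a (Icc 2 n) w) (hn : 2 ≤ n) : w n = advance n (a n) b := by
  have hnn : n ∈ Icc 2 n := right_mem_Icc.mpr hn
  refine eq_advance hn (mem_of_mem_erase (ha.apply_mem hnn)) (hwb.apply_mem hnn) ?_
  rw [← hwb.image_eq]
  exact forall_mem_image.mpr fun i hi => hw.greedy n hnn i hi (Finset.mem_Icc.mp hi).2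

end FullRows

/-! ### The closed form for diagrams with two column heights -/

section TwoStep

variable {K : Type*} [Field K] {q : K} {n m₁ m z b : ℕ} {μ a w : ℕ → ℕ} {κ d : ℕ → ℤ}

/-- The composition `(0, m + 1, …, m + 1, m₁ + m + 1)` of length `n`. -/
def IsTwoStepShape (n m₁ m : ℕ) (μ : ℕ → ℕ) : Prop :=
  ∀ i ∈ Icc 1 n, μ i = if i = n then m₁ + m + 1 else if 2 ≤ i then m + 1 else 0

lemma IsTwoStepShape.columns_eq (hn : 2 ≤ n) (hμ : IsTwoStepShape n m₁ m μ) :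
    columns n μ = Icc 2 n := by
  ext i
  rw [columns, mem_filter]
  constructor
  · rintro ⟨hi, hpos⟩
    rw [hμ i hi] at hpos
    rw [mem_Icc] at hi ⊢
    split_ifs at hpos <;> omega
  · intro hi
    have hi1 : i ∈ Icc 1 n := Icc_subset_Icc_left one_le_two hi
    refine ⟨hi1, ?_⟩
    rw [hμ i hi1]
    rw [mem_Icc] at hi
    split_ifs <;> omega

lemma IsTwoStepShape.dropRow (hμ : IsTwoStepShape n m₁ (m + 1) μ) :
    IsTwoStepShape n m₁ m (dropRow μ) := fun i hi => by
  rw [CO.dropRow, hμ i hi]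
  split_ifs <;> omega

lemma IsTwoStepShape.stepWeight_eq (hn : 2 ≤ n) (hμ : IsTwoStepShape n m₁ m (CO.dropRow μ))
    (ha : IsRowMissing n a z) (hwb : IsRowMissing n w b) (hw : IsGreedyRow a (Icc 2 n) w) :
    stepWeight n μ a w =
      (if z < b then m + 1 else 0) + if b = a n ∧ a n = n then m₁ else 0 := by
  have height (i) (hi : i ∈ Icc 2 n) : (if w i < a i then CO.dropRow μ i else 0) =
      (m + 1) * (if w i < a i then 1 else 0) +
        if i = n then if w i < a i then m₁ else 0 else 0 := by
    rw [hμ i (Icc_subset_Icc_left one_le_two hi), if_pos (mem_Icc.mp hi).1]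
    split_ifs <;> omega
  rw [stepWeight, hμ.columns_eq hn, sum_filter, sum_congr rfl height, sum_add_distrib, ← mul_sum,
    ← card_filter, ha.card_filter_lt hwb hw, sum_ite_eq' (Icc 2 n) n, if_pos (right_mem_Icc.mpr hn),
    ha.last_eq_advance hwb hw hn]
  simp only [advance_lt_iff hn, mul_ite, mul_one, mul_zero]

lemma fillingSum_eq_closedForm (hq : IsGeneric q) (hn : 2 ≤ n) (hμ : IsTwoStepShape n m₁ m μ)
    (ha : IsRowMissing n a z) (hκ : ∀ t ∈ Icc 1 n, κ t = d t + m + if t = z then 0 else 1)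
    (hd : m + ∑ t ∈ Icc 1 n, d t = m₁) : fillingSum q n μ a κ = closedForm q n m z (a n) d := by
  have hnn : n ∈ Icc 1 n := right_mem_Icc.mpr (by omega)
  have han : a n ∈ Icc 1 n := mem_of_mem_erase (ha.apply_mem (right_mem_Icc.mpr hn))
  have hcol := hμ.columns_eq hn
  induction m generalizing μ a z κ d with
  | zero =>
    rw [Nat.cast_zero, zero_add] at hd
    rw [closedForm_zero, hd, Int.toNat_natCast]
    refine fillingSum_tail hq (by omega) (ha.isRow hcol) ?_ (fun i hi => ?_) (fun t ht => ?_) hd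
    · rw [hμ n hnn, if_pos rfl]
      omega
    · rw [dropRow, hμ i hi, Pi.single_apply]
      split_ifs <;> omega
    · rw [hκ t ht, ha.rowContent hcol ht]
      push_cast
      ring
  | succ m ih =>
    have hcol' := hμ.dropRow.columns_eq hn
    choose! R hR using fun b => exists_isGreedyRow_isRowMissing (n := n) (b := b) a
    rw [fillingSum_eq_sum_nextRows q (ha.isRow hcol)
      (ha.enumeratesNextRows (by omega) hR hcol hcol'), closedForm_succ hq ha.mem_Icc han]
    refine sum_congr rfl fun b hb => ?_
    obtain ⟨hgreedy, hmissing⟩ := hR b hb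
    have hlast : R b n = advance n (a n) b := ha.last_eq_advance hmissing hgreedy hn
    have next_content : ∀ t ∈ Icc 1 n, κ t - rowContent n μ a t =
        (d + Pi.single b 1 : ℕ → ℤ) t + m + if t = b then 0 else 1 := fun t ht => by
      rw [hκ t ht, ha.rowContent hcol ht, Pi.add_apply, Pi.single_apply]
      push_cast
      split_ifs <;> ring
    have next_sum : m + ∑ t ∈ Icc 1 n, (d + Pi.single b 1 : ℕ → ℤ) t = m₁ := by
      rw [sum_Icc_add_single hb, ← hd]
      push_cast
      ring
    rw [ih hμ.dropRow hmissing next_content next_sum (hlast ▸ advance_mem_Icc han b) hcol', hlast,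
      hμ.dropRow.stepWeight_eq hn ha hmissing hgreedy, ← zpow_natCast]
    push_cast at hd ⊢
    rw [hd]

end TwoStep

/-! ### Comparison with `cCoef` -/

section Comparison

variable {n : ℕ} {μ a k : ℕ → ℕ} {τ : ℕ × ℕ → ℕ} {i j : ℕ}

lemma eq_sInf_iff_isLeast {T : Set ℕ} (hT : T.Nonempty) {x : ℕ} :
    x = sInf T ↔ IsLeast T x :=
  ⟨fun h => h ▸ isLeast_csInf hT, fun h => h.csInf_eq.symm⟩

lemma greedy_value_iff {S : Set ℕ} {o x : ℕ} (hx : x ∈ S) :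
    (({y ∈ S | o ≤ y}.Nonempty → x = sInf {y ∈ S | o ≤ y}) ∧
      (¬ {y ∈ S | o ≤ y}.Nonempty → x = sInf S)) ↔ ∀ y ∈ S, CyclicLE o x y := by
  unfold CyclicLE
  by_cases hne : {y ∈ S | o ≤ y}.Nonempty
  · simp only [hne, not_true_eq_false, true_imp_iff, false_imp_iff, and_true,
      eq_sInf_iff_isLeast]
    obtain ⟨z, hz, hoz⟩ := hne
    constructor
    · rintro ⟨⟨-, hox⟩, hle⟩ y hy
      exact Or.inl ⟨hox, (lt_or_ge y o).imp_right fun hoy => hle ⟨hy, hoy⟩⟩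
    · intro h
      have hxz := h z hz
      refine ⟨⟨hx, by omega⟩, fun y ⟨hy, hoy⟩ => ?_⟩
      have hxy := h y hy
      omega
  · simp only [hne, not_false_eq_true, true_imp_iff, false_imp_iff, true_and,
      eq_sInf_iff_isLeast ⟨x, hx⟩]
    have hlt : ∀ y ∈ S, y < o := fun y hy => lt_of_not_ge fun hoy => hne ⟨y, hy, hoy⟩
    constructor
    · exact fun h y hy => Or.inr ⟨hlt x hx, hlt y hy, h.2 hy⟩
    · refine fun h => ⟨hx, fun y hy => ?_⟩
      have hxy := h y hy
      have hxo := hlt x hx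
      omega

lemma mem_armF (hμ : Antidominant n μ) (hu : (i, j) ∈ dgF n μ) {v : ℕ × ℕ} :
    v ∈ armF n μ (i, j) ↔ v ∈ dgF n μ ∧ v.1 < i ∧ v.2 = j := by
  obtain ⟨i', j'⟩ := v
  simp only [armF, augF, mem_union, mem_filter, mem_image, mem_dgF, mem_Icc, Prod.mk.injEq] at hu ⊢
  constructor
  · rintro (⟨hv, hlt, hj, -⟩ | ⟨hv, hlt, -, hheight⟩)
    · exact ⟨hv, hlt, hj⟩
    · have hi' : i' ≤ n := by
        obtain hv | ⟨_, hv, rfl, -⟩ := hv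
        · exact hv.1.2
        · exact hv.2
      exact absurd (hμ i i' hu.1.1 hlt.le hi') hheight.not_ge
  · rintro ⟨hv, hlt, hj⟩
    exact Or.inl ⟨hv, hlt, hj, hμ i' i hv.1.1 hlt.le hu.1.2⟩

lemma greedyRule_iff (hμ : Antidominant n μ) :
    GreedyRule n μ τ ↔ ∀ i i' j, (i, j + 2) ∈ dgF n μ → (i', j + 2) ∈ dgF n μ → i' ≤ i →
      CyclicLE (τ (i, j + 1)) (τ (i, j + 2)) (τ (i', j + 2)) := by
  unfold GreedyRule
  constructor
  · intro h i i' j hi hi' hle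
    refine (greedy_value_iff (by simp)).mp (h (i, j + 2) hi (Nat.le_add_left 2 j)) _ ?_
    obtain rfl | hlt := hle.eq_or_lt
    · exact Or.inr rfl
    · exact Or.inl ⟨_, mem_coe.mpr ((mem_armF hμ hi).mpr ⟨hi', hlt, rfl⟩), rfl⟩
  · rintro h ⟨i, j⟩ hu hj
    obtain ⟨j, rfl⟩ : ∃ j', j = j' + 2 := ⟨j - 2, (Nat.sub_add_cancel hj).symm⟩
    refine (greedy_value_iff (by simp)).mpr ?_
    rintro y (⟨⟨i', j'⟩, hv, rfl⟩ | rfl)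
    · obtain ⟨hv, hlt, rfl⟩ := (mem_armF hμ hu).mp (mem_coe.mp hv)
      exact h i i' j hu hv hlt.le
    · exact .refl _ _

lemma forall_attack_ne_iff :
    (∀ u ∈ dgF n μ, ∀ v ∈ dgF n μ, Attack u v → τ u ≠ τ v) ↔
      (∀ i i' j, (i, j) ∈ dgF n μ → (i', j) ∈ dgF n μ → i ≠ i' → τ (i, j) ≠ τ (i', j)) ∧
        ∀ i i' j, (i, j + 1) ∈ dgF n μ → (i', j) ∈ dgF n μ → i < i' →
          τ (i, j + 1) ≠ τ (i', j) := by
  constructor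
  · intro h
    refine ⟨fun i i' j hu hv hne => h _ hu _ hv ⟨?_, Or.inl rfl⟩,
      fun i i' j hu hv hlt => h _ hu _ hv ⟨?_, Or.inr (Or.inl ⟨rfl, hlt⟩)⟩⟩
    · exact fun heq => hne (Prod.mk.inj heq).1
    · exact fun heq => hlt.ne (Prod.mk.inj heq).1
  · rintro ⟨hrow, hdiagonal⟩ ⟨i, j⟩ hu ⟨i', j'⟩ hv ⟨hne, rfl | ⟨rfl, hlt⟩ | ⟨rfl, hlt⟩⟩
    · exact hrow i i' j hu hv fun heq => hne (heq ▸ rfl)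
    · exact hdiagonal i i' j' hu hv hlt
    · exact (hdiagonal i' i j hv hu hlt).symm

lemma cCond_iff_isAdmissible (hμ : Antidominant n μ) (hoff : ∀ u ∉ dgF n μ, τ u = 0) :
    CCond n μ a k τ ↔ IsAdmissible n μ a (fun t => k t) τ := by
  rw [CCond, forall_attack_ne_iff, greedyRule_iff hμ]
  constructor
  · rintro ⟨hmem, hbottom, ⟨hrow, hdiagonal⟩, hgreedy, hcontent⟩
    refine ⟨hoff, fun u hu => mem_Icc.mpr (hmem u hu), hbottom, hrow, hdiagonal, hgreedy, ?_⟩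
    intro t ht
    rw [hcontent t (mem_Icc.mp ht).1 (mem_Icc.mp ht).2]
  · intro h
    exact ⟨fun u hu => mem_Icc.mp (h.mem_Icc u hu), h.bottom, ⟨h.row_ne, h.diagonal_ne⟩, h.greedy,
      fun t ht htn => Nat.cast_injective (h.content t (mem_Icc.mpr ⟨ht, htn⟩))⟩

lemma ext_injective (n : ℕ) (μ : ℕ → ℕ) : Function.Injective (ext n μ) := fun f g h => by
  funext u
  have hu := congrFun h u
  simpa only [ext, dif_pos u.2] using hu

lemma map_cCoef {K : Type*} [Field K] (φ : Polynomial ℤ →+* K) (hμ : Antidominant n μ)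
    (a k : ℕ → ℕ) :
    φ (cCoef n μ a k) = fillingSum (φ Polynomial.X) n μ a (fun t => k t) := by
  classical
  rw [cCoef, fillingSum, admissibleFillings, filter_image,
    sum_image fun f _ g _ h => ext_injective n μ h, map_sum]
  simp only [map_pow]
  refine sum_congr (filter_congr fun f _ => cCond_iff_isAdmissible hμ fun u hu => ?_) fun f _ => rfl
  exact dif_neg hu

lemma IsAdmissible.sum_content {κ : ℕ → ℤ} (h : IsAdmissible n μ a κ τ) :
    ∑ t ∈ Icc 1 n, κ t = ∑ i ∈ Icc 1 n, (μ i : ℤ) := by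
  have card_dgF : #(dgF n μ) = ∑ i ∈ Icc 1 n, μ i := by
    rw [card_eq_sum_ones, sum_dgF]
    simp
  rw [← Nat.cast_sum, ← card_dgF,
    card_eq_sum_card_fiberwise fun u hu => mem_coe.mpr (h.mem_Icc u hu), Nat.cast_sum]
  exact sum_congr rfl fun t ht => (h.content t ht).symm

lemma fillingSum_eq_zero {K : Type*} [Field K] (q : K) (a : ℕ → ℕ) {κ : ℕ → ℤ}
    (hκ : ∑ t ∈ Icc 1 n, κ t ≠ ∑ i ∈ Icc 1 n, (μ i : ℤ)) : fillingSum q n μ a κ = 0 := by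
  refine sum_eq_zero fun τ hτ => absurd ?_ hκ
  exact (mem_admissibleFillings.mp hτ).sum_content

end Comparison

/-! ### The bottom row `aTuple` -/

section BottomRow

variable {n z b i j : ℕ}

lemma getD_sort_mem {s : Finset ℕ} (hi : i < #s) : (s.sort (· ≤ ·)).getD i 0 ∈ s := by
  rw [← length_sort (α := ℕ) (· ≤ ·)] at hi
  rw [List.getD_eq_getElem _ _ hi, ← mem_sort (α := ℕ) (· ≤ ·)]
  exact List.getElem_mem hi

lemma getD_sort_injOn (s : Finset ℕ) :
    Set.InjOn (fun i => (s.sort (· ≤ ·)).getD i 0) (Set.Iio #s) := by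
  rw [← length_sort (α := ℕ) (· ≤ ·)]
  intro i hi j hj h
  simp only [List.getD_eq_getElem _ _ (Set.mem_Iio.mp hi),
    List.getD_eq_getElem _ _ (Set.mem_Iio.mp hj)] at h
  exact (sort_nodup s (· ≤ ·)).getElem_inj_iff.mp h

lemma aTuple_self : aTuple n z b n = b := if_pos rfl

lemma card_erase_erase_Icc (hz : z ∈ Icc 1 n) (hb : b ∈ (Icc 1 n).erase z) :
    #(((Icc 1 n).erase z).erase b) = n - 2 := by
  rw [card_erase_of_mem hb, card_erase_of_mem hz, Nat.card_Icc]
  rfl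

lemma aTuple_mem (hz : z ∈ Icc 1 n) (hb : b ∈ (Icc 1 n).erase z) (hj : j ∈ Ico 2 n) :
    aTuple n z b j ∈ ((Icc 1 n).erase z).erase b := by
  rw [mem_Ico] at hj
  rw [aTuple, if_neg hj.2.ne]
  exact getD_sort_mem (by rw [card_erase_erase_Icc hz hb]; omega)

lemma aTuple_injOn (hz : z ∈ Icc 1 n) (hb : b ∈ (Icc 1 n).erase z) :
    Set.InjOn (aTuple n z b) (Ico 2 n) := fun i hi j hj h => by
  have hcard := card_erase_erase_Icc hz hb
  rw [mem_coe, mem_Ico] at hi hj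
  rw [aTuple, aTuple, if_neg hi.2.ne, if_neg hj.2.ne] at h
  have hij := getD_sort_injOn _ (by rw [Set.mem_Iio, hcard]; omega)
    (by rw [Set.mem_Iio, hcard]; omega) h
  omega

lemma isRowMissing_aTuple (hn : 2 ≤ n) (hz : z ∈ Icc 1 n) (hb : b ∈ (Icc 1 n).erase z) :
    IsRowMissing n (aTuple n z b) z := by
  have himage : (Ico 2 n).image (aTuple n z b) = ((Icc 1 n).erase z).erase b := by
    refine eq_of_subset_of_card_le (image_subset_iff.mpr fun j => aTuple_mem hz hb) ?_
    rw [card_image_of_injOn (aTuple_injOn hz hb), card_erase_erase_Icc hz hb, Nat.card_Ico]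
  refine ⟨hz, ?_, ?_⟩
  · rw [← Ico_insert_right hn, coe_insert, Set.injOn_insert (by simp), ← coe_image, himage,
      aTuple_self]
    exact ⟨aTuple_injOn hz hb, notMem_erase b _⟩
  · rw [← Ico_insert_right hn, image_insert, himage, aTuple_self, insert_erase hb]

end BottomRow

/-! ### The right-hand side -/

section RightHandSide

variable {K : Type*} [Field K] {q : K} {n m₁ m₂ : ℕ} {k l : ℕ → ℕ}

/-- The letter `i - 1` of the convention `k_0 = k_n`: since `Fin n` counts from zero, the index `i`
stands for the letter `i`, except that `0` stands for `n`. -/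
def cyclicLetter (n : ℕ) : Fin n ↪ ℕ where
  toFun i := if (i : ℕ) = 0 then n else i
  inj' i j h := by
    have := i.2
    have := j.2
    dsimp only at h
    split_ifs at h <;> omega

lemma cyclicLetter_apply (i : Fin n) : cyclicLetter n i = if (i : ℕ) = 0 then n else (i : ℕ) :=
  rfl

lemma map_cyclicLetter (n : ℕ) : univ.map (cyclicLetter n) = Icc 1 n := by
  refine eq_of_subset_of_card_le (map_subset_iff_subset_preimage.mpr fun i _ => ?_) ?_
  · have := i.2
    rw [mem_preimage, cyclicLetter_apply, mem_Icc]
    split_ifs <;> omega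
  · rw [card_map, card_univ, Fintype.card_fin, Nat.card_Icc, Nat.add_sub_cancel]

/-- The pairs `(l, p)` over which the right-hand side sums; `lp.1 i` is the paper's `l_{i + 1}`. -/
def contentPairs (n m₁ m₂ : ℕ) (k : ℕ → ℕ) : Finset ((Fin n → ℕ) × (Fin n → ℕ)) :=
  ((Fintype.piFinset fun _ : Fin n => Finset.range (m₂ + 1)) ×ˢ
    (Fintype.piFinset fun _ : Fin n => Finset.range (m₁ + 1))).filter
  fun lp => (∑ i, lp.1 i) = m₂ ∧ (∑ i, lp.2 i) = m₁ ∧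
    ∀ i : Fin n, lp.2 i + (∑ α ∈ Finset.univ.erase i, lp.1 α) =
      (if (i : ℕ) = 0 then k n else k (i : ℕ))

lemma mem_contentPairs {lp : (Fin n → ℕ) × (Fin n → ℕ)} :
    lp ∈ contentPairs n m₁ m₂ k ↔ ∑ i, lp.1 i = m₂ ∧ ∑ i, lp.2 i = m₁ ∧
      ∀ i, lp.2 i + m₂ = lp.1 i + k (cyclicLetter n i) := by
  have mem_range_of_sum {f : Fin n → ℕ} {m : ℕ} (hf : ∑ i, f i = m) (i : Fin n) :
      f i ∈ range (m + 1) :=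
    mem_range_succ_iff.mpr (hf ▸ single_le_sum (fun _ _ => Nat.zero_le _) (mem_univ i))
  have content_iff (hl : ∑ i, lp.1 i = m₂) (i : Fin n) :
      lp.2 i + ∑ α ∈ univ.erase i, lp.1 α = (if (i : ℕ) = 0 then k n else k i) ↔
        lp.2 i + m₂ = lp.1 i + k (cyclicLetter n i) := by
    rw [← apply_ite k, ← hl, ← add_sum_erase univ lp.1 (mem_univ i), add_left_comm, add_right_inj]
    rfl
  rw [contentPairs, mem_filter, mem_product, Fintype.mem_piFinset, Fintype.mem_piFinset]
  constructor
  · rintro ⟨-, hl, hp, hk⟩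
    exact ⟨hl, hp, fun i => (content_iff hl i).mp (hk i)⟩
  · rintro ⟨hl, hp, hk⟩
    exact ⟨⟨mem_range_of_sum hl, mem_range_of_sum hp⟩, hl, hp,
      fun i => (content_iff hl i).mpr (hk i)⟩

lemma sum_of_mem_contentPairs {lp : (Fin n → ℕ) × (Fin n → ℕ)}
    (h : lp ∈ contentPairs n m₁ m₂ k) : m₁ + n * m₂ = m₂ + ∑ t ∈ Icc 1 n, k t := by
  obtain ⟨hl, hp, hk⟩ := mem_contentPairs.mp h
  have hsum := sum_congr (rfl : univ = univ) fun i _ => hk i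
  rw [sum_add_distrib, sum_add_distrib, hl, hp] at hsum
  simpa [← map_cyclicLetter] using hsum

/-- The pair `(l, p)` of `contentPairs` with prescribed multiplicities `l`, indexed by letters. -/
def contentPair (n m₂ : ℕ) (k l : ℕ → ℕ) : (Fin n → ℕ) × (Fin n → ℕ) :=
  (fun i => l (cyclicLetter n i), fun i => l (cyclicLetter n i) + k (cyclicLetter n i) - m₂)

lemma contentPair_mem (hk : m₁ + n * m₂ = m₂ + ∑ t ∈ Icc 1 n, k t)
    (hl : ∑ t ∈ Icc 1 n, l t = m₂)
    (hle : ∀ i, m₂ ≤ l (cyclicLetter n i) + k (cyclicLetter n i)) :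
    contentPair n m₂ k l ∈ contentPairs n m₁ m₂ k := by
  have hp (i : Fin n) := Nat.sub_add_cancel (hle i)
  have hsum := sum_congr (rfl : univ = univ) fun i _ => hp i
  rw [← map_cyclicLetter, sum_map] at hl hk
  rw [sum_add_distrib, sum_add_distrib, hl, ← hk, sum_const, card_univ, Fintype.card_fin,
    smul_eq_mul] at hsum
  exact mem_contentPairs.mpr ⟨hl, Nat.add_right_cancel hsum, hp⟩

lemma extend_cyclicLetter (f : Fin n → ℕ) (i : Fin n) :
    Function.extend (cyclicLetter n) f 0 (cyclicLetter n i) = f i :=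
  (cyclicLetter n).injective.extend_apply f 0 i

lemma extend_cyclicLetter_of_notMem (f : Fin n → ℕ) {t : ℕ} (ht : t ∉ Icc 1 n) :
    Function.extend (cyclicLetter n) f 0 t = 0 := by
  refine Function.extend_apply' f (0 : ℕ → ℕ) t ?_
  rintro ⟨i, rfl⟩
  exact ht (map_cyclicLetter n ▸ mem_map_of_mem _ (mem_univ i))

lemma extend_cyclicLetter_comp (hl : ∀ t, l t ≠ 0 → t ∈ Icc 1 n) :
    Function.extend (cyclicLetter n) (fun i => l (cyclicLetter n i)) 0 = l := by
  funext t
  by_cases ht : t ∈ Icc 1 n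
  · rw [← map_cyclicLetter, mem_map] at ht
    obtain ⟨i, -, rfl⟩ := ht
    exact extend_cyclicLetter _ i
  · rw [extend_cyclicLetter_of_notMem _ ht]
    exact (not_not.mp (mt (hl t) ht)).symm

lemma contentPair_extend {lp : (Fin n → ℕ) × (Fin n → ℕ)} (h : lp ∈ contentPairs n m₁ m₂ k) :
    contentPair n m₂ k (Function.extend (cyclicLetter n) lp.1 0) = lp := by
  simp only [contentPair, extend_cyclicLetter, ← (mem_contentPairs.mp h).2.2, Nat.add_sub_cancel]

lemma sum_contentPairs {M : Type*} [AddCommMonoid M] (hk : m₁ + n * m₂ = m₂ + ∑ t ∈ Icc 1 n, k t)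
    (G : (Fin n → ℕ) × (Fin n → ℕ) → M) :
    ∑ lp ∈ contentPairs n m₁ m₂ k, G lp =
      ∑ l ∈ piAntidiag (Icc 1 n) m₂ with
        ∀ i, m₂ ≤ l (cyclicLetter n i) + k (cyclicLetter n i), G (contentPair n m₂ k l) := by
  refine sum_nbij' (fun lp => Function.extend (cyclicLetter n) lp.1 0) (contentPair n m₂ k)
    (fun lp h => ?_) (fun l h => ?_) (fun lp h => contentPair_extend h) (fun l h => ?_)
    (fun lp h => by rw [contentPair_extend h])
  · obtain ⟨hl, -, hp⟩ := mem_contentPairs.mp h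
    simp only [mem_filter, mem_piAntidiag, ← hp, extend_cyclicLetter, le_add_iff_nonneg_left,
      Nat.zero_le, implies_true, and_true]
    refine ⟨?_, fun t => not_imp_comm.mp (extend_cyclicLetter_of_notMem lp.1)⟩
    simp only [← map_cyclicLetter, sum_map, extend_cyclicLetter, hl]
  · obtain ⟨hl, hle⟩ := mem_filter.mp h
    exact contentPair_mem hk (mem_piAntidiag.mp hl).1 hle
  · exact extend_cyclicLetter_comp (mem_piAntidiag.mp (mem_filter.mp h).1).2

lemma map_qMultinomial_liftFin (φ : Polynomial ℤ →+* K) (hφ : IsGeneric (φ Polynomial.X)) {m : ℕ}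
    {l : Fin n → ℕ} (hl : ∑ i, l i = m) :
    φ (qMultinomial n m (liftFin n l)) =
      qFact (φ Polynomial.X) m * ∏ i, qFactInv (φ Polynomial.X) (l i) := by
  have hlift (i : Fin n) : liftFin n l (1 + i) = l i := by simp [liftFin]
  have hsum : ∑ t ∈ Icc 1 n, (liftFin n l t : ℤ) = m := by
    rw [← Ico_add_one_right_eq_Icc, sum_Ico_eq_sum_range, Nat.add_sub_cancel, sum_range]
    simp only [hlift, ← hl, Nat.cast_sum]
  have hprod : ∏ t ∈ Icc 1 n, qFactInv (φ Polynomial.X) (liftFin n l t) =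
      ∏ i, qFactInv (φ Polynomial.X) (l i) := by
    rw [← Ico_add_one_right_eq_Icc, prod_Ico_eq_prod_range, Nat.add_sub_cancel, prod_range]
    simp only [hlift]
  rw [← hprod, ← sum_wordsOfContent hφ hsum, qMultinomial, map_sum]
  refine sum_congr (Finset.ext fun w => ?_) fun w _ => map_pow φ _ _
  simp only [mem_filter, mem_wordsOfContent, Fintype.mem_piFinset, letterCount, Nat.cast_inj]

lemma closedExponent_eq_fin (hn : 2 ≤ n) {d : ℕ → ℤ} {l : ℕ → ℕ} {p : Fin n → ℕ}
    (hp : ∀ i, (p i : ℤ) = l (cyclicLetter n i) + d (cyclicLetter n i)) :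
    closedExponent n 1 n d l =
      (l (cyclicLetter n ⟨0, by omega⟩) * p ⟨0, by omega⟩ +
        ∑ i ∈ univ.erase (⟨1, by omega⟩ : Fin n), l (cyclicLetter n i) +
        ∑ i ∈ univ.erase (⟨0, by omega⟩ : Fin n), p i : ℕ) := by
  have h0 : cyclicLetter n ⟨0, by omega⟩ = n := by rw [cyclicLetter_apply, if_pos rfl]
  have h1 : cyclicLetter n ⟨1, by omega⟩ = 1 := by rw [cyclicLetter_apply, if_neg one_ne_zero]
  have hIoc : Ioc 1 n = (univ.erase ⟨1, by omega⟩).map (cyclicLetter n) := by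
    rw [map_erase, map_cyclicLetter, h1, Icc_erase_left]
  have hIco : Ico 1 n = (univ.erase ⟨0, by omega⟩).map (cyclicLetter n) := by
    rw [map_erase, map_cyclicLetter, h0, Icc_erase_right]
  rw [closedExponent, hIoc, hIco, sum_map, sum_map]
  push_cast
  simp only [hp, h0]
  ring

lemma pairWeight_eq_fin {d : ℕ → ℤ} {l : ℕ → ℕ} {p : Fin n → ℕ}
    (hp : ∀ i, (p i : ℤ) = l (cyclicLetter n i) + d (cyclicLetter n i)) :
    pairWeight q (Icc 1 n) d l =
      (∏ i, qFactInv q (l (cyclicLetter n i))) * ∏ i, qFactInv q (p i) := by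
  simp only [pairWeight, ← map_cyclicLetter, prod_map, prod_mul_distrib, hp]

lemma pairWeight_eq_zero (q : K) {ι : Type*} {S : Finset ι} {d : ι → ℤ} {l : ι → ℕ} {t : ι}
    (ht : t ∈ S) (h : l t + d t < 0) : pairWeight q S d l = 0 :=
  prod_eq_zero ht (by rw [qFactInv_of_neg q h, mul_zero])

lemma closedSum_eq_sum_filter (q : K) (n m a v : ℕ) (k : ℕ → ℕ) :
    closedSum q n m a v (fun t => k t - m) =
      ∑ l ∈ piAntidiag (Icc 1 n) m with ∀ i, m ≤ l (cyclicLetter n i) + k (cyclicLetter n i),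
        q ^ closedExponent n a v (fun t => k t - m) l *
          pairWeight q (Icc 1 n) (fun t => k t - m) l := by
  refine (sum_filter_of_ne fun l _ hne i => ?_).symm
  by_contra! hlt
  refine hne (mul_eq_zero_of_right _ (pairWeight_eq_zero q (t := cyclicLetter n i) ?_ ?_))
  · exact map_cyclicLetter n ▸ mem_map_of_mem _ (mem_univ i)
  · omega

lemma add_sum_sub_eq (hk : m₁ + n * m₂ = m₂ + ∑ t ∈ Icc 1 n, k t) :
    m₂ + ∑ t ∈ Icc 1 n, ((k t : ℤ) - m₂) = m₁ := by
  rw [sum_sub_distrib, sum_const, Nat.card_Icc, Nat.add_sub_cancel, nsmul_eq_mul]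
  zify at hk
  linarith

lemma map_sum_contentPairs (φ : Polynomial ℤ →+* K) (hφ : IsGeneric (φ Polynomial.X))
    (hn : 2 ≤ n) (hk : m₁ + n * m₂ = m₂ + ∑ t ∈ Icc 1 n, k t) :
    φ (∑ lp ∈ contentPairs n m₁ m₂ k,
        Polynomial.X ^ (lp.1 ⟨0, by omega⟩ * lp.2 ⟨0, by omega⟩ +
            (∑ α ∈ Finset.univ.erase (⟨1, by omega⟩ : Fin n), lp.1 α) +
            ∑ α ∈ Finset.univ.erase (⟨0, by omega⟩ : Fin n), lp.2 α) *
          qMultinomial n m₂ (liftFin n lp.1) * qMultinomial n m₁ (liftFin n lp.2)) =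
      closedForm (φ Polynomial.X) n m₂ 1 n (fun t => k t - m₂) := by
  rw [closedForm, add_sum_sub_eq hk, Int.toNat_natCast, closedSum_eq_sum_filter,
    sum_contentPairs hk, map_sum, mul_sum]
  refine sum_congr rfl fun l hl => ?_
  obtain ⟨hl, hle⟩ := mem_filter.mp hl
  obtain ⟨hlsum, hpsum, -⟩ :=
    mem_contentPairs.mp (contentPair_mem hk (mem_piAntidiag.mp hl).1 hle)
  have hp (i : Fin n) : ((contentPair n m₂ k l).2 i : ℤ) =
      l (cyclicLetter n i) + (k (cyclicLetter n i) - m₂) := by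
    have := hle i
    dsimp only [contentPair]
    omega
  rw [map_mul, map_mul, map_pow, map_qMultinomial_liftFin φ hφ hlsum,
    map_qMultinomial_liftFin φ hφ hpsum, closedExponent_eq_fin hn hp, pairWeight_eq_fin hp,
    zpow_natCast]
  dsimp only [contentPair]
  ring

end RightHandSide

/-! ### The closed formula -/

section ClosedFormula

variable {n m₁ m₂ m z : ℕ} {μ : ℕ → ℕ}

lemma IsTwoStepShape.antidominant (hμ : IsTwoStepShape n m₁ m μ) : Antidominant n μ := by
  intro i j hi hij hj
  rw [hμ i (mem_Icc.mpr ⟨hi, hij.trans hj⟩), hμ j (mem_Icc.mpr ⟨hi.trans hij, hj⟩)]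
  split_ifs <;> omega

lemma IsTwoStepShape.sum_eq (hn : 2 ≤ n) (hμ : IsTwoStepShape n m₁ m μ) :
    m + 1 + ∑ i ∈ Icc 1 n, μ i = m₁ + n * (m + 1) := by
  have h1 : 1 ∈ Icc 1 n := left_mem_Icc.mpr (by omega)
  have hnn : n ∈ Icc 1 n := right_mem_Icc.mpr (by omega)
  have hsum : ∑ i ∈ Icc 1 n, (μ i + if i = 1 then m + 1 else 0) =
      ∑ i ∈ Icc 1 n, (m + 1 + if i = n then m₁ else 0) := sum_congr rfl fun i hi => by
    rw [hμ i hi]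
    rw [mem_Icc] at hi
    split_ifs <;> omega
  rw [sum_add_distrib, sum_add_distrib, sum_ite_eq', sum_ite_eq', if_pos h1, if_pos hnn, sum_const,
    Nat.card_Icc, smul_eq_mul, Nat.add_sub_cancel] at hsum
  omega

lemma sum_ite_add_one (hz : z ∈ Icc 1 n) (k : ℕ → ℕ) :
    ∑ t ∈ Icc 1 n, (if t = z then k t else k t + 1) + 1 = ∑ t ∈ Icc 1 n, k t + n := by
  rw [← add_sum_erase _ _ hz, ← add_sum_erase _ k hz, if_pos rfl,
    sum_congr rfl fun t ht => if_neg (ne_of_mem_erase ht), sum_add_distrib, sum_const,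
    card_erase_of_mem hz, Nat.card_Icc]
  rw [mem_Icc] at hz
  simp only [smul_eq_mul]
  omega

lemma isGeneric_algebraMap_X :
    IsGeneric (algebraMap (Polynomial ℤ) (FractionRing (Polynomial ℤ)) Polynomial.X) where
  ne_zero := by
    rw [Ne, IsFractionRing.to_map_eq_zero_iff]
    exact Polynomial.X_ne_zero
  not_isOfFinOrder := by
    rw [isOfFinOrder_iff_pow_eq_one]
    rintro ⟨j, hj, h⟩
    rw [← map_pow, map_eq_one_iff _ (IsFractionRing.injective _ _)] at h
    have hdegree := congrArg Polynomial.natDegree h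
    rw [Polynomial.natDegree_X_pow, Polynomial.natDegree_one] at hdegree
    omega

lemma map_cBar {K : Type*} [Field K] (φ : Polynomial ℤ →+* K) (hφ : IsGeneric (φ Polynomial.X))
    (hn : 2 ≤ n) (hμ : IsTwoStepShape n m₁ m₂ μ) {k : ℕ → ℕ}
    (hk : m₁ + n * m₂ = m₂ + ∑ t ∈ Icc 1 n, k t) :
    φ (cBar n μ 1 n fun i => if i = 1 then k i else k i + 1) =
      closedForm (φ Polynomial.X) n m₂ 1 n (fun t => k t - m₂) := by
  have hmissing : IsRowMissing n (aTuple n 1 n) 1 :=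
    isRowMissing_aTuple hn (left_mem_Icc.mpr (by omega))
      (mem_erase.mpr ⟨by omega, right_mem_Icc.mpr (by omega)⟩)
  rw [cBar, map_cCoef φ hμ.antidominant,
    fillingSum_eq_closedForm (d := fun t => k t - m₂) hφ hn hμ hmissing ?_ ?_, aTuple_self]
  · intro t _
    split_ifs <;> push_cast <;> ring
  · exact add_sum_sub_eq hk

lemma map_cBar_eq_zero {K : Type*} [Field K] (φ : Polynomial ℤ →+* K)
    (hn : 2 ≤ n) (hμ : IsTwoStepShape n m₁ m₂ μ) {k : ℕ → ℕ}
    (hk : m₁ + n * m₂ ≠ m₂ + ∑ t ∈ Icc 1 n, k t) :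
    φ (cBar n μ 1 n fun i => if i = 1 then k i else k i + 1) = 0 := by
  rw [cBar, map_cCoef φ hμ.antidominant]
  refine fillingSum_eq_zero _ _ fun h => hk ?_
  have hcontent := sum_ite_add_one (left_mem_Icc.mpr (by omega : 1 ≤ n)) k
  have hcells := hμ.sum_eq hn
  norm_cast at h
  rw [h] at hcontent
  linarith

end ClosedFormula

end CO

open CO in
/-- Closed formula for `c^{λ⁺}_{1|n}` with
`λ⁺ = (0, m₂+1, …, m₂+1, m₁+m₂+1)`:
`c^{λ⁺}_{1|n}(k₁, k₂+1, …, k_n+1)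
  = Σ_{l,p} q^{l₁p₁ + l₁ + l₃ + ⋯ + l_n + p₂ + ⋯ + p_n} binom_q(m₂; l) binom_q(m₁; p)`,
the sum being over `l, p ∈ ℤ_{≥0}^n` with `Σl = m₂`, `Σp = m₁`, and
`p_i + Σ_{α≠i} l_α = k_{i-1}` for all `i` (indices mod `n`, `k₀ := k_n`). -/
theorem cbar_closed_formula_scrolled (n : ℕ) (hn : 3 ≤ n) (m₁ m₂ : ℕ)
    (lamP : ℕ → ℕ)
    (hlamP : lamP = fun i => if i = n then m₁ + m₂ + 1 else if 2 ≤ i then m₂ + 1 else 0)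
    (k : ℕ → ℕ) :
    cBar n lamP 1 n (fun i => if i = 1 then k i else k i + 1)
      = ∑ lp ∈ ((Fintype.piFinset fun _ : Fin n => Finset.range (m₂ + 1)) ×ˢ
            (Fintype.piFinset fun _ : Fin n => Finset.range (m₁ + 1))).filter
          fun lp => (∑ i, lp.1 i) = m₂ ∧ (∑ i, lp.2 i) = m₁ ∧
            ∀ i : Fin n, lp.2 i + (∑ α ∈ Finset.univ.erase i, lp.1 α) =
              (if (i : ℕ) = 0 then k n else k (i : ℕ)),
        Polynomial.X ^ (lp.1 ⟨0, by omega⟩ * lp.2 ⟨0, by omega⟩ +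
            (∑ α ∈ Finset.univ.erase (⟨1, by omega⟩ : Fin n), lp.1 α) +
            ∑ α ∈ Finset.univ.erase (⟨0, by omega⟩ : Fin n), lp.2 α) *
          qMultinomial n m₂ (liftFin n lp.1) * qMultinomial n m₁ (liftFin n lp.2) := by
  have hn2 : 2 ≤ n := by omega
  have hshape : IsTwoStepShape n m₁ m₂ lamP := fun i _ => congrFun hlamP i
  apply IsFractionRing.injective (Polynomial ℤ) (FractionRing (Polynomial ℤ))
  by_cases hk : m₁ + n * m₂ = m₂ + ∑ t ∈ Icc 1 n, k t
  · exact (map_cBar _ isGeneric_algebraMap_X hn2 hshape hk).trans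
      (map_sum_contentPairs _ isGeneric_algebraMap_X hn2 hk).symm
  · rw [map_cBar_eq_zero _ hn2 hshape hk, eq_comm]
    exact (congrArg _ (sum_eq_zero fun lp hlp => absurd (sum_of_mem_contentPairs hlp) hk)).trans
      (map_zero _)
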